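/- Let M be a compact connected boundaryless topological manifold of dimension n with a compatible metric and let f : M → M be an expansive homeomorphism such that the closure of Per_H equals M. Then every point of Per_H admits a local product structure; consequently, the set of points of M admitting a local product structure is open and dense in M. -/

import Mathlib

open Metric Set

variable {M : Type*} [MetricSpace M]

/-- Iterates of a homeomorphism, indexed by `ℤ`. -/
def iterZ (f : M ≃ₜ M) (k : ℤ) (x : M) : M := (f.toEquiv ^ k) x

/-- `f` is expansive with expansivity constant `α`. -/
def IsExpansive (f : M ≃ₜ M) (α : ℝ) : Prop :=
  ∀ x y : M, x ≠ y → ∃ k : ℤ, α < dist (iterZ f k x) (iterZ f k y)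

/-- Stable set of `x`. -/
def Ws (f : M ≃ₜ M) (x : M) : Set M :=
  {y | Filter.Tendsto (fun k : ℤ => dist (iterZ f k x) (iterZ f k y)) Filter.atTop (nhds 0)}

/-- Unstable set of `x`. -/
def Wu (f : M ≃ₜ M) (x : M) : Set M :=
  {y | Filter.Tendsto (fun k : ℤ => dist (iterZ f k x) (iterZ f k y)) Filter.atBot (nhds 0)}

/-- Local (`ε`-local) stable set of `x`. -/
def WsLoc (f : M ≃ₜ M) (ε : ℝ) (x : M) : Set M :=
  {y | ∀ k : ℤ, 0 ≤ k → dist (iterZ f k x) (iterZ f k y) ≤ ε}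

/-- Local (`ε`-local) unstable set of `x`. -/
def WuLoc (f : M ≃ₜ M) (ε : ℝ) (x : M) : Set M :=
  {y | ∀ k : ℤ, k ≤ 0 → dist (iterZ f k x) (iterZ f k y) ≤ ε}

/-- The model space `ℝ^r × ℝ^{n-r}`. -/
abbrev ModelSp (n r : ℕ) := (Fin r → ℝ) × (Fin (n - r) → ℝ)

/-- The model hyperbolic linear map `L(a,b) = (a/2, 2b)`. -/
noncomputable def modelL (n r : ℕ) : ModelSp n r → ModelSp n r :=
  fun q => (fun i => q.1 i / 2, fun i => 2 * q.2 i)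

/-- Topologically hyperbolic periodic points of index `r` (`Per_H^r`). -/
def PerHr (f : M ≃ₜ M) (n r : ℕ) : Set M :=
  {p | ∃ l : ℕ, 1 ≤ l ∧ (f.toEquiv ^ l) p = p ∧
    ∃ (U : Set M) (V : Set (ModelSp n r)) (h : U ≃ₜ V),
      IsOpen U ∧ IsOpen V ∧ (0 : ModelSp n r) ∈ V ∧
      ∃ hp : p ∈ U, ((h ⟨p, hp⟩ : V) : ModelSp n r) = 0 ∧
        ∀ z : M, ∀ hz : z ∈ U, ∀ hz' : (f.toEquiv ^ l) z ∈ U,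
          ((h ⟨(f.toEquiv ^ l) z, hz'⟩ : V) : ModelSp n r) = modelL n r (h ⟨z, hz⟩)}

/-- All topologically hyperbolic periodic points (`Per_H`). -/
def PerH (f : M ≃ₜ M) (n : ℕ) : Set M := ⋃ r ∈ Finset.range (n + 1), PerHr f n r

/-- `p` admits a local product structure. -/
def AdmitsLPS (f : M ≃ₜ M) (n : ℕ) (p : M) : Prop :=
  ∃ (k : ℕ) (h : (Fin k → ℝ) × (Fin (n - k) → ℝ) → M) (ε : ℝ),
    0 < ε ∧ Topology.IsEmbedding h ∧ p ∈ Set.range h ∧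
    ∀ x : Fin k → ℝ, ∀ y : Fin (n - k) → ℝ,
      h '' ({x} ×ˢ univ) = WsLoc f ε (h (x, y)) ∩ Set.range h ∧
      h '' (univ ×ˢ {y}) = WuLoc f ε (h (x, y)) ∩ Set.range h

/-!
Let `p` be a hyperbolic periodic point, with coordinates `(a, b)` in a small box about it, and let
`q` be a hyperbolic periodic point close to `p`, of any index. Expansivity confines the local stable
leaf of `q` in the box to its local stable set, which stays close to `W^s(p)`; so this leaf can
leave the box only through the side where `‖a‖` is maximal, and the unstable leaf only through the
side where `‖b‖` is maximal. The two leaves meet only at `q`, and there the difference of their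
parametrizations is, after a deformation, a local homeomorphism. This difference is therefore
essential: no continuous map with the same boundary values omits `0`. Killing the `a`-coordinate of
the unstable leaf and the `b`-coordinate of the stable one keeps the boundary values away from `0`,
so the local stable set of `q` crosses the unstable axis `a = 0`.

By density and compactness the local stable set of every `x` near `p` meets the unstable axis, by
expansivity in a single point `πu x`, and `πu` is continuous. Together with the symmetric map `πs`
this gives a continuous injection `(πu, πs)` of a neighbourhood of `p` into a space of dimension
`n`. By invariance of domain it is a homeomorphism onto an open set, and its inverse is a local
product structure.

Essentiality of local homeomorphisms and invariance of domain are derived from the fact that the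
integral of the Jacobian determinant of a smooth map depends only on its boundary values.
-/

open Filter Topology MeasureTheory Module

section NullLagrangian

variable {ι E : Type*} [NormedAddCommGroup E] [NormedSpace ℝ E]

lemma det_fderiv_eq_sum [Fintype ι] [DecidableEq ι] {u : (ι → ℝ) → ι → ℝ} {x : ι → ℝ}
    (hu : DifferentiableAt ℝ u x) :
    (fderiv ℝ u x).det = ∑ σ : Equiv.Perm ι, ((Equiv.Perm.sign σ : ℤ) : ℝ) *
      ∏ i, fderiv ℝ (fun y => u y i) x (Pi.single (σ i) 1) := by
  have hentry : ∀ i (v : ι → ℝ), fderiv ℝ (fun y => u y i) x v = fderiv ℝ u x v i := fun i v => by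
    rw [fderiv_apply hu]; rfl
  simp_rw [hentry]
  rw [ContinuousLinearMap.det, ← LinearMap.det_toMatrix', ← Matrix.det_transpose, Matrix.det_apply']
  simp only [Matrix.transpose_apply, LinearMap.toMatrix'_apply, ContinuousLinearMap.coe_coe]

lemma det_fderiv_add [Fintype ι] [DecidableEq ι] {u v : (ι → ℝ) → ι → ℝ} {x : ι → ℝ}
    (hu : DifferentiableAt ℝ u x) (hv : DifferentiableAt ℝ v x) :
    (fderiv ℝ (u + v) x).det =
      ∑ S : Finset ι, (fderiv ℝ (fun y => S.piecewise (u y) (v y)) x).det := by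
  have hS : ∀ S : Finset ι, fderiv ℝ (fun y => S.piecewise (u y) (v y)) x =
      ContinuousLinearMap.pi (S.piecewise (fun i => fderiv ℝ (fun y => u y i) x)
        fun i => fderiv ℝ (fun y => v y i) x) := by
    intro S
    refine (hasFDerivAt_pi.2 fun i => ?_).fderiv
    by_cases hi : i ∈ S
    · simpa only [Finset.piecewise_eq_of_mem _ _ _ hi] using
        (differentiableAt_pi.1 hu i).hasFDerivAt
    · simpa only [Finset.piecewise_eq_of_notMem _ _ _ hi] using
        (differentiableAt_pi.1 hv i).hasFDerivAt
  let row (w : (ι → ℝ) → ι → ℝ) (i j : ι) : ℝ := fderiv ℝ (fun y => w y i) x (Pi.single j 1)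
  have hsum : (fderiv ℝ (u + v) x).det = Matrix.detRowAlternating (row u + row v) := by
    rw [ContinuousLinearMap.det, ← LinearMap.det_toMatrix', fderiv_add hu hv]
    refine congrArg Matrix.det (Matrix.ext fun i j => ?_)
    simp [row, LinearMap.toMatrix'_apply, fderiv_apply hu, fderiv_apply hv]
  rw [hsum, AlternatingMap.map_add_univ]
  refine Finset.sum_congr rfl fun S _ => ?_
  rw [hS, ContinuousLinearMap.det, ← LinearMap.det_toMatrix']
  refine congrArg Matrix.det (Matrix.ext fun i j => ?_)
  by_cases hi : i ∈ S <;> simp [row, LinearMap.toMatrix'_apply, hi]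

lemma differentiableAt_partial {g : E → ℝ} (hg : ContDiff ℝ 2 g) (v x : E) :
    DifferentiableAt ℝ (fun y => fderiv ℝ g y v) x :=
  ((hg.fderiv_right (m := 1) (by norm_num)).clm_apply contDiff_const).differentiable
    (by norm_num) x

lemma fderiv_prod_partial [DecidableEq ι] {u : ι → E → ℝ} (hu : ∀ i, ContDiff ℝ 2 (u i))
    (s : Finset ι) (v : ι → E) (w x : E) :
    fderiv ℝ (fun y => ∏ i ∈ s, fderiv ℝ (u i) y (v i)) x w =
      ∑ k ∈ s, (∏ i ∈ s.erase k, fderiv ℝ (u i) x (v i)) *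
        fderiv ℝ (fderiv ℝ (u k)) x w (v k) := by
  rw [(HasFDerivAt.finsetProd fun i _ =>
    (differentiableAt_partial (hu i) (v i) x).hasFDerivAt).fderiv]
  simp only [sum_apply, smul_apply, smul_eq_mul]
  refine Finset.sum_congr rfl fun k _ => ?_
  rw [fderiv_clm_apply (((hu k).fderiv_right (m := 1) (by norm_num)).differentiable (by norm_num) x)
    (by fun_prop)]
  simp

-- Swapping `σ i₀` and `σ k` changes the sign of `σ` but not the second derivative of `u k`.
lemma sum_sign_mul_fderiv_cofactor_eq_zero [Fintype ι] [DecidableEq ι] (i₀ : ι)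
    {u : ι → (ι → ℝ) → ℝ} (hu : ∀ i, ContDiff ℝ 2 (u i)) (x : ι → ℝ) :
    ∑ σ : Equiv.Perm ι, ((Equiv.Perm.sign σ : ℤ) : ℝ) *
      fderiv ℝ (fun y => ∏ i ∈ Finset.univ.erase i₀, fderiv ℝ (u i) y (Pi.single (σ i) 1)) x
        (Pi.single (σ i₀) 1) = 0 := by
  simp_rw [fderiv_prod_partial hu, Finset.mul_sum]
  rw [Finset.sum_comm]
  refine Finset.sum_eq_zero fun k hk => ?_
  have hki : i₀ ≠ k := (Finset.ne_of_mem_erase hk).symm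
  set term : Equiv.Perm ι → ℝ := fun σ => ((Equiv.Perm.sign σ : ℤ) : ℝ) *
    ((∏ i ∈ (Finset.univ.erase i₀).erase k, fderiv ℝ (u i) x (Pi.single (σ i) 1)) *
      fderiv ℝ (fderiv ℝ (u k)) x (Pi.single (σ i₀) 1) (Pi.single (σ k) 1)) with hterm
  have hswap : ∀ σ, term (σ * Equiv.swap i₀ k) = -term σ := by
    intro σ
    have hprod : ∏ i ∈ (Finset.univ.erase i₀).erase k,
        fderiv ℝ (u i) x (Pi.single (σ (Equiv.swap i₀ k i)) 1) =
        ∏ i ∈ (Finset.univ.erase i₀).erase k, fderiv ℝ (u i) x (Pi.single (σ i) 1) :=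
      Finset.prod_congr rfl fun i hi => by
        rw [Equiv.swap_apply_of_ne_of_ne (Finset.ne_of_mem_erase (Finset.mem_of_mem_erase hi))
          (Finset.ne_of_mem_erase hi)]
    have hsymm := (hu k).contDiffAt (x := x).isSymmSndFDerivAt (by simp)
    simp only [hterm, Equiv.Perm.sign_mul, Equiv.Perm.sign_swap hki, Equiv.Perm.mul_apply,
      Equiv.swap_apply_left, Equiv.swap_apply_right]
    rw [hprod, hsymm (Pi.single (σ k) 1) (Pi.single (σ i₀) 1)]
    push_cast
    ring
  have hneg : ∑ σ, term σ = -∑ σ, term σ := by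
    rw [← Finset.sum_neg_distrib, ← Equiv.sum_comp (Equiv.mulRight (Equiv.swap i₀ k)) term]
    exact Finset.sum_congr rfl fun σ _ => hswap σ
  exact self_eq_neg.1 hneg

lemma hasCompactSupport_det_fderiv [Finite ι] {u : (ι → ℝ) → ι → ℝ} (hu : Differentiable ℝ u)
    {i₀ : ι} (hc : HasCompactSupport fun x => u x i₀) :
    HasCompactSupport fun x => (fderiv ℝ u x).det := by
  classical
  cases nonempty_fintype ι
  refine (hc.fderiv (𝕜 := ℝ)).mono fun x hx hrow => hx ?_
  beta_reduce
  rw [det_fderiv_eq_sum (hu x)]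
  refine Finset.sum_eq_zero fun σ _ => ?_
  rw [Finset.prod_eq_zero (Finset.mem_univ i₀) (by rw [hrow]; rfl), mul_zero]

lemma integral_fderiv_mul_eq_neg_of_hasCompactSupport [FiniteDimensional ℝ E] [MeasurableSpace E]
    [BorelSpace E] {μ : Measure E} [μ.IsAddHaarMeasure] {g h : E → ℝ} (hg : ContDiff ℝ 1 g)
    (hh : ContDiff ℝ 1 h) (hc : HasCompactSupport g) (v : E) :
    ∫ x, fderiv ℝ g x v * h x ∂μ = -∫ x, g x * fderiv ℝ h x v ∂μ := by
  have hint {a b : E → ℝ} (ha : Continuous a) (hb : Continuous b) (hac : HasCompactSupport a) :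
      Integrable (fun x => a x * b x) μ :=
    (ha.mul hb).integrable_of_hasCompactSupport hac.mul_right
  have hpartial {a : E → ℝ} (ha : ContDiff ℝ 1 a) : Continuous fun x => fderiv ℝ a x v :=
    (ha.continuous_fderiv one_ne_zero).clm_apply continuous_const
  rw [integral_mul_fderiv_eq_neg_fderiv_mul_of_integrable
    (hint (hpartial hg) hh.continuous (hc.fderiv_apply (𝕜 := ℝ) v))
    (hint hg.continuous (hpartial hh) hc) (hint hg.continuous hh.continuous hc)
    (fun x _ => hg.differentiable one_ne_zero x) (fun x _ => hh.differentiable one_ne_zero x),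
    neg_neg]

lemma integral_det_fderiv_eq_zero [Fintype ι] {u : (ι → ℝ) → ι → ℝ} (hu : ContDiff ℝ 2 u) {i₀ : ι}
    (hc : HasCompactSupport fun x => u x i₀) : ∫ x, (fderiv ℝ u x).det = 0 := by
  classical
  have hui : ∀ i, ContDiff ℝ 2 fun y => u y i := contDiff_pi.1 hu
  let D (σ : Equiv.Perm ι) (i : ι) (x : ι → ℝ) : ℝ :=
    fderiv ℝ (fun y => u y i) x (Pi.single (σ i) 1)
  let P (σ : Equiv.Perm ι) (x : ι → ℝ) : ℝ := ∏ i ∈ Finset.univ.erase i₀, D σ i x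
  let Q (σ : Equiv.Perm ι) (x : ι → ℝ) : ℝ := fderiv ℝ (P σ) x (Pi.single (σ i₀) 1)
  have hD : ∀ σ i, ContDiff ℝ 1 (D σ i) := fun σ i =>
    ((hui i).fderiv_right (by norm_num)).clm_apply contDiff_const
  have hP : ∀ σ, ContDiff ℝ 1 (P σ) := fun σ => contDiff_prod fun i _ => hD σ i
  have hDP : ∀ σ, Integrable fun x => D σ i₀ x * P σ x := fun σ =>
    ((hD σ i₀).continuous.mul (hP σ).continuous).integrable_of_hasCompactSupport
      (hc.fderiv_apply (𝕜 := ℝ) (Pi.single (σ i₀) 1)).mul_right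
  have huQ : ∀ σ, Integrable fun x => u x i₀ * Q σ x := fun σ =>
    ((hui i₀).continuous.mul (((hP σ).continuous_fderiv one_ne_zero).clm_apply
      continuous_const)).integrable_of_hasCompactSupport hc.mul_right
  have hparts : ∀ σ, ∫ x, D σ i₀ x * P σ x = -∫ x, u x i₀ * Q σ x := fun σ =>
    integral_fderiv_mul_eq_neg_of_hasCompactSupport ((hui i₀).of_le (by norm_num)) (hP σ) hc _
  calc ∫ x, (fderiv ℝ u x).det
      = ∫ x, ∑ σ : Equiv.Perm ι, ((Equiv.Perm.sign σ : ℤ) : ℝ) * (D σ i₀ x * P σ x) := by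
        refine integral_congr_ae (.of_forall fun x => ?_)
        beta_reduce
        rw [det_fderiv_eq_sum (hu.differentiable (by norm_num) x)]
        exact Finset.sum_congr rfl fun σ _ => congrArg _
          (Finset.mul_prod_erase Finset.univ (fun i => D σ i x) (Finset.mem_univ i₀)).symm
    _ = -∑ σ : Equiv.Perm ι, ∫ x, ((Equiv.Perm.sign σ : ℤ) : ℝ) * (u x i₀ * Q σ x) := by
        rw [integral_finsetSum _ fun σ _ => (hDP σ).const_mul _]
        simp_rw [integral_const_mul, hparts, mul_neg, Finset.sum_neg_distrib]
    _ = -∫ x, u x i₀ * ∑ σ : Equiv.Perm ι, ((Equiv.Perm.sign σ : ℤ) : ℝ) * Q σ x := by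
        rw [← integral_finsetSum _ fun σ _ => (huQ σ).const_mul _]
        simp_rw [Finset.mul_sum, mul_left_comm]
    _ = 0 := by
        simp only [Q, P, D, sum_sign_mul_fderiv_cofactor_eq_zero i₀ hui, mul_zero,
          integral_zero, neg_zero]

lemma integral_det_fderiv_sub_eq_zero [Fintype ι] {u v : (ι → ℝ) → ι → ℝ} (hu : ContDiff ℝ 2 u)
    (hv : ContDiff ℝ 2 v) (hc : HasCompactSupport (u - v)) :
    ∫ x, ((fderiv ℝ u x).det - (fderiv ℝ v x).det) = 0 := by
  classical
  let w (S : Finset ι) (y : ι → ℝ) : ι → ℝ := S.piecewise ((u - v) y) (v y)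
  have hw : ∀ S, ContDiff ℝ 2 (w S) := fun S => contDiff_pi.2 fun i => by
    by_cases hi : i ∈ S
    · simpa [w, hi] using (contDiff_pi.1 hu i).sub (contDiff_pi.1 hv i)
    · simpa [w, hi] using contDiff_pi.1 hv i
  have hwc : ∀ S : Finset ι, ∀ i ∈ S, HasCompactSupport fun x => w S x i := fun S i hi => by
    simp only [w, Finset.piecewise_eq_of_mem _ _ _ hi]
    exact hc.comp_left (g := fun z : ι → ℝ => z i) rfl
  have hexpand : ∀ x, (fderiv ℝ u x).det - (fderiv ℝ v x).det =
      ∑ S ∈ Finset.univ.erase ∅, (fderiv ℝ (w S) x).det := by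
    intro x
    have hdiff {g : (ι → ℝ) → ι → ℝ} (hg : ContDiff ℝ 2 g) : DifferentiableAt ℝ g x :=
      hg.differentiable (by norm_num) x
    have h := det_fderiv_add (hdiff (hu.sub hv)) (hdiff hv)
    have hempty : w ∅ = v := by ext; simp [w]
    rw [← Finset.add_sum_erase _ _ (Finset.mem_univ ∅)] at h
    change (fderiv ℝ ((u - v) + v) x).det = (fderiv ℝ (w ∅) x).det + _ at h
    rw [sub_add_cancel, hempty] at h
    rw [h, add_sub_cancel_left]
    rfl
  simp_rw [hexpand]
  have hmem : ∀ S ∈ Finset.univ.erase (∅ : Finset ι), ∃ i, i ∈ S := fun S hS =>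
    Finset.nonempty_iff_ne_empty.2 (Finset.ne_of_mem_erase hS)
  rw [integral_finsetSum _ fun S hS => ?_]
  · refine Finset.sum_eq_zero fun S hS => ?_
    obtain ⟨i, hi⟩ := hmem S hS
    exact integral_det_fderiv_eq_zero (hw S) (hwc S i hi)
  · obtain ⟨i, hi⟩ := hmem S hS
    exact (ContinuousLinearMap.continuous_det.comp
      ((hw S).continuous_fderiv (by norm_num))).integrable_of_hasCompactSupport
        (hasCompactSupport_det_fderiv ((hw S).differentiable (by norm_num)) (hwc S i hi))

end NullLagrangian

/-- `F` is essential on `O` in the sense of Granas' topological transversality: every continuous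
map on `closure O` with the boundary values of `F` has a zero. Only the values of `F` on
`frontier O` matter. -/
def IsEssentialOn {X E : Type*} [TopologicalSpace X] [TopologicalSpace E] [Zero E]
    (F : X → E) (O : Set X) : Prop :=
  ∀ G : X → E, ContinuousOn G (closure O) → EqOn G F (frontier O) → ∃ x ∈ closure O, G x = 0

lemma exists_contDiff_step {κ : ℝ} (hκ : 0 < κ) : ∃ s β : ℝ → ℝ, ContDiff ℝ 2 s ∧ Continuous β ∧
    (∀ t, HasDerivAt s (β t) t) ∧ (∀ t, κ ≤ |t| → β t = 0) ∧ (∀ t, 0 ≤ β t) ∧ β 0 ≠ 0 := by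
  let b : ContDiffBump (0 : ℝ) := ⟨κ / 2, κ, by positivity, by linarith⟩
  have hderiv : ∀ t, HasDerivAt (fun t => ∫ u in (0 : ℝ)..t, b u) (b t) t := fun t =>
    intervalIntegral.integral_hasDerivAt_right (b.continuous.intervalIntegrable _ _)
      (b.continuous.stronglyMeasurableAtFilter _ _) b.continuous.continuousAt
  refine ⟨fun t => ∫ u in (0 : ℝ)..t, b u, b, ?_, b.continuous, hderiv, fun t ht => ?_,
    fun t => b.nonneg, ?_⟩
  · rw [← one_add_one_eq_two, contDiff_succ_iff_deriv]
    refine ⟨fun t => (hderiv t).differentiableAt, by simp, ?_⟩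
    rw [funext fun t => (hderiv t).deriv]
    exact b.contDiff
  · exact b.zero_of_le_dist (by simpa [Real.dist_eq] using ht)
  · rw [b.one_of_mem_closedBall (mem_closedBall_self b.rIn_pos.le)]
    exact one_ne_zero

section Pi

variable {ι : Type*}

lemma det_fderiv_comp_apply [Fintype ι] {s β : ℝ → ℝ} (hs : ∀ t, HasDerivAt s (β t) t)
    {u : (ι → ℝ) → ι → ℝ} {x : ι → ℝ} (hu : DifferentiableAt ℝ u x) :
    (fderiv ℝ (fun y i => s (u y i)) x).det = (∏ i, β (u x i)) * (fderiv ℝ u x).det := by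
  classical
  have hui := differentiableAt_pi.1 hu
  have hsu : ∀ i, HasFDerivAt (fun y => s (u y i)) (β (u x i) • fderiv ℝ (fun y => u y i) x) x :=
    fun i => (hs (u x i)).comp_hasFDerivAt x (hui i).hasFDerivAt
  rw [det_fderiv_eq_sum (differentiableAt_pi.2 fun i => (hsu i).differentiableAt),
    det_fderiv_eq_sum hu, Finset.mul_sum]
  refine Finset.sum_congr rfl fun σ _ => ?_
  simp_rw [(hsu _).fderiv, smul_apply, smul_eq_mul, Finset.prod_mul_distrib]
  ring

lemma prod_eq_zero_of_le_norm [Fintype ι] {β : ℝ → ℝ} {κ : ℝ} (hκ : 0 < κ)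
    (hβ : ∀ t, κ ≤ |t| → β t = 0) {y : ι → ℝ} (hy : κ ≤ ‖y‖) : ∏ i, β (y i) = 0 := by
  by_contra hne
  refine hy.not_gt ((pi_norm_lt_iff hκ).2 fun i => ?_)
  by_contra! hi
  exact Finset.prod_ne_zero_iff.1 hne i (Finset.mem_univ i) (hβ _ hi)

-- After composing both maps with a step function of width `κ`, the Jacobian of `v` vanishes and
-- that of `u` is a nonnegative bump at `0`, yet the two Jacobians have the same integral.
lemma exists_norm_lt_of_contDiff [Fintype ι] {u v : (ι → ℝ) → ι → ℝ} (hu : ContDiff ℝ 2 u)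
    (hv : ContDiff ℝ 2 v) {K : Set (ι → ℝ)} (hK : IsCompact K) (huv : EqOn u v Kᶜ) {κ r : ℝ}
    (hκ : 0 < κ) (hκr : κ ≤ r) (hrK : ball 0 r ⊆ K) (hid : EqOn u id (ball 0 r))
    (hlarge : ∀ x ∈ K \ ball 0 r, κ ≤ ‖u x‖) : ∃ x ∈ K, ‖v x‖ < κ := by
  by_contra! hvlarge
  obtain ⟨s, β, hs, hβ, hderiv, hβ0, hβnonneg, hβne⟩ := exists_contDiff_step hκ
  let step (w : (ι → ℝ) → ι → ℝ) (x : ι → ℝ) : ι → ℝ := fun i => s (w x i)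
  have hstep : ∀ {w}, ContDiff ℝ 2 w → ContDiff ℝ 2 (step w) := fun hw =>
    contDiff_pi.2 fun i => hs.comp (contDiff_pi.1 hw i)
  have hdet : ∀ {w}, ContDiff ℝ 2 w → ∀ x,
      (fderiv ℝ (step w) x).det = (∏ i, β (w x i)) * (fderiv ℝ w x).det := fun hw x =>
    det_fderiv_comp_apply hderiv (hw.differentiable (by norm_num) x)
  have hsmall : ∀ y : ι → ℝ, κ ≤ ‖y‖ → ∏ i, β (y i) = 0 := fun y =>
    prod_eq_zero_of_le_norm hκ hβ0
  have hdiff : ∀ x, (fderiv ℝ (step u) x).det - (fderiv ℝ (step v) x).det = ∏ i, β (x i) := by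
    intro x
    by_cases hxr : x ∈ ball 0 r
    · have heq : u =ᶠ[𝓝 x] id := hid.eventuallyEq_of_mem (isOpen_ball.mem_nhds hxr)
      rw [hdet hv, hsmall _ (hvlarge x (hrK hxr)), hdet hu, heq.fderiv_eq, heq.eq_of_nhds,
        fderiv_id, zero_mul, sub_zero, ContinuousLinearMap.det, ContinuousLinearMap.coe_id,
        LinearMap.det_id, mul_one, id]
    · have hx : κ ≤ ‖x‖ := hκr.trans (by simpa using hxr)
      by_cases hxK : x ∈ K
      · rw [hdet hv, hsmall _ (hvlarge x hxK), hdet hu, hsmall _ (hlarge x ⟨hxK, hxr⟩), hsmall x hx]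
        ring
      · have heq : step u =ᶠ[𝓝 x] step v := by
          filter_upwards [hK.isClosed.isOpen_compl.mem_nhds hxK] with y hy
          simp only [step, huv hy]
        rw [heq.fderiv_eq, sub_self, hsmall x hx]
  have hzero : ∫ x : ι → ℝ, ∏ i, β (x i) = 0 := by
    rw [← integral_det_fderiv_sub_eq_zero (hstep hu) (hstep hv)
      (.intro hK fun x hx => by simp [step, huv hx])]
    simp_rw [hdiff]
  have hcont : Continuous fun x : ι → ℝ => ∏ i, β (x i) := by fun_prop
  exact (hcont.integral_pos_of_hasCompactSupport_nonneg_nonzero (μ := volume) (x := 0)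
    (.intro (isCompact_closedBall 0 κ) fun x hx => hsmall x (by simpa using hx : κ < ‖x‖).le)
    (fun x => Finset.prod_nonneg fun i _ => hβnonneg _)
    (Finset.prod_ne_zero_iff.2 fun i _ => hβne)).ne' hzero

lemma exists_add_eq_zero_of_eventuallyEq_id [Finite ι] {A V : (ι → ℝ) → ι → ℝ} (hA : Continuous A)
    (hV : Continuous V) {O : Set (ι → ℝ)} (hOb : Bornology.IsBounded O)
    (hO : O ∈ 𝓝 0) (hVO : ∀ x ∉ O, V x = 0) (hid : A =ᶠ[𝓝 0] id)
    (hA0 : ∀ x ∈ closure O, A x = 0 → x = 0) : ∃ x ∈ closure O, A x + V x = 0 := by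
  cases nonempty_fintype ι
  by_contra! hne
  have hK : IsCompact (closure O) := hOb.isCompact_closure
  obtain ⟨δ, hδ, hball⟩ := Metric.eventually_nhds_iff_ball.1 (hid.and hO)
  obtain ⟨m₁, hm₁, hAV⟩ := hK.exists_forall_le' (f := fun x => ‖A x + V x‖) (a := 0)
    (by fun_prop) fun x hx => norm_pos_iff.2 (hne x hx)
  obtain ⟨m₂, hm₂, hAlarge⟩ := (hK.diff (isOpen_ball (x := 0) (ε := δ / 2))).exists_forall_le'
    (f := fun x => ‖A x‖) (a := 0) (by fun_prop) fun x hx => norm_pos_iff.2 fun h =>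
      hx.2 (by rw [hA0 x hx.1 h]; exact mem_ball_self (by positivity))
  let κ := min (m₁ / 3) (min (m₂ / 2) (δ / 2))
  have hκ : 0 < κ := by positivity
  have hκ₁ : κ ≤ m₁ / 3 := min_le_left _ _
  have hκ₂ : κ ≤ m₂ / 2 := (min_le_right _ _).trans (min_le_left _ _)
  obtain ⟨A', hA', hdistA, heqA, -⟩ := hA.exists_contDiff_approx_and_eqOn 2
    (ε := fun _ => κ) continuous_const (fun _ => hκ)
    (S := closedBall 0 (δ / 2)) (U := ball 0 δ) isClosed_closedBall
    (isOpen_ball.mem_nhdsSet.2 (closedBall_subset_ball (by linarith)))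
    (contDiff_id.contDiffOn.congr fun x hx => (hball x hx).1)
  obtain ⟨V', hV', hdistV, hsuppV⟩ := hV.exists_contDiff_approx 2
    (ε := fun _ => κ) continuous_const (fun _ => hκ)
  have hV'O : ∀ x ∉ closure O, V' x = 0 := fun x hx => by
    by_contra h
    exact hsuppV h (hVO x fun hxO => hx (subset_closure hxO))
  obtain ⟨x, hx, hlt⟩ := exists_norm_lt_of_contDiff (u := A') (v := fun x => A' x + V' x)
    (κ := κ) (r := δ / 2) hA' (hA'.add hV') hK (fun x hx => by simp [hV'O x hx]) hκ
    ((min_le_right _ _).trans (min_le_right _ _))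
    (fun x hx => subset_closure (hball x (ball_subset_ball (by linarith) hx)).2)
    (fun x hx => (heqA (ball_subset_closedBall hx)).trans
      (hball x (ball_subset_ball (by linarith) hx)).1)
    (fun x hx => by
      have h := norm_sub_norm_le (A x) (A' x)
      rw [← dist_eq_norm, dist_comm] at h
      linarith [hAlarge x hx, hdistA x])
  have h := norm_sub_norm_le (A x + V x) (A' x + V' x)
  rw [← dist_eq_norm, dist_comm] at h
  linarith [hAV x hx, hdistA x, hdistV x, dist_add_add_le (A' x) (V' x) (A x) (V x)]

lemma isEssentialOn_of_eventuallyEq_id [Finite ι] {F : (ι → ℝ) → ι → ℝ} {O : Set (ι → ℝ)}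
    (hO : IsOpen O) (hOb : Bornology.IsBounded O) (h0 : 0 ∈ O) (hF : ContinuousOn F (closure O))
    (hid : F =ᶠ[𝓝 0] id) (hz : ∀ x ∈ closure O, F x = 0 → x = 0) : IsEssentialOn F O := by
  classical
  intro G hG hfr
  obtain ⟨A, hA⟩ := ContinuousMap.exists_restrict_eq (s := closure O) isClosed_closure
    (⟨(closure O).domRestrict F, hF.domRestrict⟩ : C(closure O, ι → ℝ))
  have hAF : ∀ x ∈ closure O, A x = F x := fun x hx => congrArg (fun φ => φ ⟨x, hx⟩) hA
  have hV : Continuous (O.piecewise (fun x => G x - F x) fun _ => 0) :=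
    continuous_piecewise (fun x hx => by simp [hfr hx]) (hG.sub hF) continuousOn_const
  obtain ⟨x, hx, hx0⟩ := exists_add_eq_zero_of_eventuallyEq_id A.continuous hV hOb
    (hO.mem_nhds h0) (fun x hx => piecewise_eq_of_notMem _ _ _ hx)
    (by filter_upwards [hid, hO.mem_nhds h0] with x hx hxO using
        (hAF x (subset_closure hxO)).trans hx)
    (fun x hx h => hz x hx (by rw [← hAF x hx, h]))
  refine ⟨x, hx, ?_⟩
  by_cases hxO : x ∈ O
  · simpa [hxO, hAF x hx] using hx0
  · rw [piecewise_eq_of_notMem _ _ _ hxO, add_zero] at hx0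
    rw [hfr ⟨hx, by rwa [hO.interior_eq]⟩, ← hAF x hx, hx0]

end Pi

/-- The retraction of a normed space onto the closed ball of radius `η` about `0` which moves the
points outside the ball along rays through `0`. -/
noncomputable def radialRetract {E : Type*} [NormedAddCommGroup E] [NormedSpace ℝ E] (η : ℝ)
    (y : E) : E :=
  (η / max η ‖y‖) • y

section radialRetract

variable {E : Type*} [NormedAddCommGroup E] [NormedSpace ℝ E] {η : ℝ}

lemma continuous_radialRetract (hη : 0 < η) : Continuous (radialRetract η : E → E) :=
  (continuous_const.div (by fun_prop) fun _ => (lt_max_of_lt_left hη).ne').smul continuous_id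

lemma norm_radialRetract_le (hη : 0 < η) (y : E) : ‖radialRetract η y‖ ≤ η := by
  have h : 0 < max η ‖y‖ := lt_max_of_lt_left hη
  rw [radialRetract, norm_smul, Real.norm_of_nonneg (by positivity), div_mul_eq_mul_div,
    div_le_iff₀ h]
  gcongr
  exact le_max_right _ _

lemma radialRetract_eq_self (hη : 0 < η) {y : E} (hy : ‖y‖ ≤ η) : radialRetract η y = y := by
  rw [radialRetract, max_eq_left hy, div_self hη.ne', one_smul]

lemma radialRetract_eq_zero_iff (hη : 0 < η) {y : E} : radialRetract η y = 0 ↔ y = 0 :=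
  smul_eq_zero_iff_right (div_pos hη (lt_max_of_lt_left hη)).ne'

end radialRetract

namespace IsEssentialOn

lemma of_comp_left {X E E' : Type*} [TopologicalSpace X] [TopologicalSpace E] [Zero E]
    [TopologicalSpace E'] [Zero E'] {Q : E → E'} (hQ : Continuous Q)
    (hQ0 : ∀ y, Q y = 0 → y = 0) {F : X → E} {O : Set X} (h : IsEssentialOn (Q ∘ F) O) :
    IsEssentialOn F O := fun G hG hfr =>
  (h (Q ∘ G) (hQ.comp_continuousOn hG) fun _ hx => congrArg Q (hfr hx)).imp fun _ hx =>
    ⟨hx.1, hQ0 _ hx.2⟩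

lemma of_comp_homeomorph {X Y E : Type*} [TopologicalSpace X] [TopologicalSpace Y]
    [TopologicalSpace E] [Zero E] (T : X ≃ₜ Y) {F : Y → E} {O : Set Y}
    (h : IsEssentialOn (F ∘ T) (T ⁻¹' O)) : IsEssentialOn F O := by
  intro G hG hfr
  obtain ⟨x, hx, hx0⟩ := h (G ∘ T)
    (hG.comp T.continuous.continuousOn (by rw [← T.preimage_closure]; exact mapsTo_preimage T _))
    fun x hx => hfr (by rwa [← T.preimage_frontier] at hx)
  exact ⟨T x, by rwa [← T.preimage_closure] at hx, hx0⟩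

lemma exists_zero_of_homotopy {X E : Type*} [MetricSpace X] [TopologicalSpace E] [T1Space E]
    [Zero E] {F : X → E} {O : Set X} (hF : IsEssentialOn F O) (hO : IsCompact (closure O))
    {H : ℝ → X → E} (hH : ContinuousOn (fun w : ℝ × X => H w.1 w.2) (Icc 0 1 ×ˢ closure O))
    (h0 : EqOn (H 0) F (frontier O)) (hfr : ∀ t ∈ Icc (0 : ℝ) 1, ∀ x ∈ frontier O, H t x ≠ 0) :
    ∃ x ∈ closure O, H 1 x = 0 := by
  let Z : Set (ℝ × X) := (Icc 0 1 ×ˢ closure O) ∩ (fun w => H w.1 w.2) ⁻¹' {0}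
  have hZ : IsCompact Z := (isCompact_Icc.prod hO).of_isClosed_subset
    (hH.preimage_isClosed_of_isClosed (isClosed_Icc.prod isClosed_closure) isClosed_singleton)
    inter_subset_left
  have hdisj : Disjoint (frontier O) (Prod.snd '' Z) := by
    rw [Set.disjoint_right]
    rintro _ ⟨w, ⟨⟨ht, -⟩, hw0⟩, rfl⟩ hw
    exact hfr _ ht _ hw hw0
  obtain ⟨τ, hτ0, hτ1, hτ⟩ := exists_continuous_zero_one_of_isClosed isClosed_frontier
    (hZ.image continuous_snd).isClosed hdisj
  obtain ⟨x, hx, hx0⟩ := hF (fun x => H (τ x) x)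
    (hH.comp (f := fun x => (τ x, x)) (by fun_prop) fun x hx => ⟨hτ x, hx⟩)
    fun x hx => by
      have hτx : τ x = 0 := hτ0 hx
      simpa only [hτx] using h0 hx
  have hτx : τ x = 1 := hτ1 ⟨(τ x, x), ⟨⟨hτ x, hx⟩, hx0⟩, rfl⟩
  exact ⟨x, hx, by rwa [hτx] at hx0⟩

end IsEssentialOn

section FiniteDimensional

variable {E E' : Type*} [NormedAddCommGroup E] [NormedSpace ℝ E] [FiniteDimensional ℝ E]
  [NormedAddCommGroup E'] [NormedSpace ℝ E'] {X : Type*} [TopologicalSpace X] {F : E → E'}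
  {O : Set E}

lemma isEssentialOn_of_eventuallyEq (hO : IsOpen O) (hOb : Bornology.IsBounded O) (h0 : 0 ∈ O)
    (hF : ContinuousOn F (closure O)) (hz : ∀ x ∈ closure O, F x = 0 → x = 0)
    (g : OpenPartialHomeomorph E E') (hg : 0 ∈ g.source) (hg0 : g 0 = 0) (hFg : F =ᶠ[𝓝 0] g) :
    IsEssentialOn F O := by
  let T : (Fin (finrank ℝ E) → ℝ) ≃L[ℝ] E := ContinuousLinearEquiv.ofFinrankEq (by simp)
  obtain ⟨η, hη, hηg⟩ := nhds_basis_closedBall.mem_iff.1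
    (g.open_target.mem_nhds (by simpa only [hg0] using g.map_source hg))
  have hmem : ∀ y, radialRetract η y ∈ g.target := fun y =>
    hηg (mem_closedBall_zero_iff.2 (norm_radialRetract_le hη y))
  let Q : E' → (Fin (finrank ℝ E) → ℝ) := fun y => T.symm (g.symm (radialRetract η y))
  have hQ : Continuous Q := T.symm.continuous.comp
    (g.continuousOn_symm.comp_continuous (continuous_radialRetract hη) hmem)
  have hQ0 : ∀ y, Q y = 0 → y = 0 := fun y hy => by
    rw [T.symm.map_eq_zero_iff] at hy
    rw [← radialRetract_eq_zero_iff hη, ← g.right_inv (hmem y), hy, hg0]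
  have hT : Tendsto T (𝓝 0) (𝓝 0) := by simpa only [map_zero] using T.continuous.tendsto 0
  have hsmall : ∀ᶠ x in 𝓝 0, ‖g x‖ < η :=
    (g.continuousAt hg).norm.eventually_lt_const (by simpa [hg0] using hη)
  have hcl : closure (T.toHomeomorph ⁻¹' O) = T ⁻¹' closure O :=
    (T.toHomeomorph.preimage_closure O).symm
  refine .of_comp_left hQ hQ0 (.of_comp_homeomorph T.toHomeomorph
    (isEssentialOn_of_eventuallyEq_id (hO.preimage T.continuous) ?_ ?_ ?_ ?_ fun x hx hx0 => ?_))
  · rw [ContinuousLinearEquiv.coe_toHomeomorph, ← T.image_symm_eq_preimage]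
    exact T.symm.lipschitz.isBounded_image hOb
  · simpa using h0
  · rw [hcl]
    exact hQ.comp_continuousOn (hF.comp T.continuous.continuousOn (mapsTo_preimage T _))
  · filter_upwards [hT.eventually hFg, hT.eventually hsmall,
      hT.eventually (g.open_source.mem_nhds hg)] with x hFx hxη hxg
    simp only [Function.comp_apply, ContinuousLinearEquiv.coe_toHomeomorph, hFx, Q,
      radialRetract_eq_self hη hxη.le, g.left_inv hxg, T.symm_apply_apply, id]
  · rw [hcl] at hx
    exact T.map_eq_zero_iff.1 (hz _ hx (hQ0 _ hx0))

lemma exists_continuousOn_of_local_homotopy {S : Set E} (hS : IsClosed S)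
    {F : E → X} (hF : ContinuousOn F S) {η : ℝ} (hη : 0 < η) {H : ℝ → E → X}
    (hH : ContinuousOn (fun w : ℝ × E => H w.1 w.2) (Icc 0 1 ×ˢ closedBall 0 η))
    (hH0 : EqOn (H 0) F (closedBall 0 η)) :
    ∃ F' : E → X, ContinuousOn F' S ∧ F' =ᶠ[𝓝 0] H 1 ∧ (∀ x, η ≤ ‖x‖ → F' x = F x) ∧
      ∀ x ∈ closedBall 0 η, ∃ t ∈ Icc (0 : ℝ) 1, F' x = H t x := by
  classical
  let χ : ContDiffBump (0 : E) := ⟨η / 2, η, half_pos hη, half_lt_self hη⟩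
  let F' : E → X := (closedBall 0 η).piecewise (fun x => H (χ x) x) F
  have hF'in : EqOn F' (fun x => H (χ x) x) (closedBall 0 η) := piecewise_eqOn _ _ _
  have hF'out : ∀ x, η ≤ ‖x‖ → F' x = F x := fun x hx => by
    by_cases hxη : x ∈ closedBall 0 η
    · rw [hF'in hxη]
      beta_reduce
      rw [χ.zero_of_le_dist (by rwa [dist_zero_right]), hH0 hxη]
    · exact piecewise_eq_of_notMem _ _ _ hxη
  refine ⟨F', ?_, ?_, hF'out, fun x hx => ⟨χ x, ⟨χ.nonneg, χ.le_one⟩, hF'in hx⟩⟩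
  · have hin : ContinuousOn F' (closedBall 0 η) :=
      (hH.comp (f := fun x => (χ x, x)) (χ.continuous.prodMk continuous_id).continuousOn
        fun x hx => ⟨⟨χ.nonneg, χ.le_one⟩, hx⟩).congr hF'in
    have hout : ContinuousOn F' (S ∩ {x | η ≤ ‖x‖}) :=
      (hF.mono inter_subset_left).congr fun x hx => hF'out x hx.2
    refine (hin.union_of_isClosed hout isClosed_closedBall (hS.inter
      (isClosed_le continuous_const continuous_norm))).mono fun x hx => ?_
    rcases le_total ‖x‖ η with h | h
    exacts [.inl (mem_closedBall_zero_iff.2 h), .inr ⟨hx, h⟩]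
  · filter_upwards [closedBall_mem_nhds 0 (half_pos hη)] with x hx
    rw [hF'in (closedBall_subset_closedBall (half_le_self hη.le) hx)]
    beta_reduce
    rw [χ.one_of_mem_closedBall hx]

lemma isEssentialOn_of_local_homotopy (hO : IsOpen O) (hOb : Bornology.IsBounded O)
    (hF : ContinuousOn F (closure O)) (hz : ∀ x ∈ closure O, F x = 0 → x = 0)
    {η : ℝ} (hη : 0 < η) (hηO : closedBall 0 η ⊆ O) {H : ℝ → E → E'}
    (hH : ContinuousOn (fun w : ℝ × E => H w.1 w.2) (Icc 0 1 ×ˢ closedBall 0 η))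
    (hH0 : EqOn (H 0) F (closedBall 0 η))
    (hHz : ∀ t ∈ Icc (0 : ℝ) 1, ∀ x ∈ closedBall 0 η, H t x = 0 → x = 0)
    (g : OpenPartialHomeomorph E E') (hg : 0 ∈ g.source) (hg0 : g 0 = 0) (hHg : H 1 =ᶠ[𝓝 0] g) :
    IsEssentialOn F O := by
  obtain ⟨F', hF', hF'H, hF'out, hF'in⟩ :=
    exists_continuousOn_of_local_homotopy isClosed_closure hF hη hH hH0
  have hF'z : ∀ x ∈ closure O, F' x = 0 → x = 0 := fun x hx hx0 => by
    rcases le_total ‖x‖ η with hxη | hxη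
    · obtain ⟨t, ht, hFt⟩ := hF'in x (mem_closedBall_zero_iff.2 hxη)
      exact hHz t ht x (mem_closedBall_zero_iff.2 hxη) (hFt ▸ hx0)
    · exact hz x hx ((hF'out x hxη).symm.trans hx0)
  have hess := isEssentialOn_of_eventuallyEq hO hOb (hηO (mem_closedBall_self hη.le)) hF' hF'z
    g hg hg0 (hF'H.trans hHg)
  refine fun G hG hfr => hess G hG fun x hx => (hfr hx).trans (hF'out x ?_).symm
  by_contra! h
  exact (hO.frontier_eq ▸ hx).2 (hηO (mem_closedBall_zero_iff.2 h.le))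

end FiniteDimensional

lemma norm_smul_le_norm_of_abs_le_one {E : Type*} [SeminormedAddCommGroup E] [NormedSpace ℝ E]
    {t : ℝ} (ht : |t| ≤ 1) (v : E) : ‖t • v‖ ≤ ‖v‖ := by
  rw [norm_smul]
  exact mul_le_of_le_one_left (norm_nonneg v) ht

lemma mk_smul_mem_closedBall {E E' : Type*} [SeminormedAddCommGroup E] [SeminormedAddCommGroup E']
    [NormedSpace ℝ E'] {t η : ℝ} (ht : |t| ≤ 1) {z : E × E'} (hz : z ∈ closedBall 0 η) :
    (z.1, t • z.2) ∈ closedBall 0 η := by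
  rw [mem_closedBall_zero_iff] at hz ⊢
  exact max_le ((norm_fst_le z).trans hz)
    ((norm_smul_le_norm_of_abs_le_one ht z.2).trans ((norm_snd_le z).trans hz))

lemma exists_openPartialHomeomorph_reflect_sub {E₁ E₂ E : Type*} [NormedAddCommGroup E₁]
    [NormedAddCommGroup E₂] [NormedAddCommGroup E] (g : OpenPartialHomeomorph (E₁ × E₂) E)
    (hg : 0 ∈ g.source) :
    ∃ g' : OpenPartialHomeomorph (E₁ × E₂) E, 0 ∈ g'.source ∧ g' 0 = 0 ∧
      ∀ z, g' z = g (z.1, -z.2) - g 0 := by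
  have hneg : ((0 : E₁), -(0 : E₂)) = 0 := by rw [neg_zero]; rfl
  refine ⟨(((Homeomorph.refl E₁).prodCongr (Homeomorph.neg E₂)).toOpenPartialHomeomorph.trans
    g).trans (Homeomorph.subRight (g 0)).toOpenPartialHomeomorph, ⟨⟨mem_univ _, ?_⟩, mem_univ _⟩,
    sub_eq_zero.2 (congrArg g hneg), fun z => rfl⟩
  change ((0 : E₁), -(0 : E₂)) ∈ g.source
  rwa [hneg]

section Product

variable {Es Eu Es' Eu' : Type*} [NormedAddCommGroup Es] [NormedSpace ℝ Es]
  [NormedAddCommGroup Eu] [NormedSpace ℝ Eu] [NormedAddCommGroup Es'] [NormedSpace ℝ Es']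
  [NormedAddCommGroup Eu'] [NormedSpace ℝ Eu'] [FiniteDimensional ℝ Es'] [FiniteDimensional ℝ Eu']
  {A : Es' → Es × Eu} {B : Eu' → Es × Eu} {Os : Set Es'} {Ou : Set Eu'}

-- Near `0` the difference is `g (x, 0) - g (0, y)`, which is deformed through
-- `g (x, -t y) - g (0, (1 - t) y)` into the local homeomorphism `g (x, -y) - g 0`.
lemma isEssentialOn_sub (hOs : IsOpen Os) (hOu : IsOpen Ou) (hOsb : Bornology.IsBounded Os)
    (hOub : Bornology.IsBounded Ou) (h0s : 0 ∈ Os) (h0u : 0 ∈ Ou)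
    (hA : ContinuousOn A (closure Os)) (hB : ContinuousOn B (closure Ou))
    (g : OpenPartialHomeomorph (Es' × Eu') (Es × Eu)) (hg : 0 ∈ g.source)
    (hAg : ∀ᶠ x in 𝓝 0, A x = g (x, 0)) (hBg : ∀ᶠ y in 𝓝 0, B y = g (0, y))
    (hAB : ∀ x ∈ closure Os, ∀ y ∈ closure Ou, A x = B y → x = 0 ∧ y = 0) :
    IsEssentialOn (fun z : Es' × Eu' => A z.1 - B z.2) (Os ×ˢ Ou) := by
  have hO : IsOpen (Os ×ˢ Ou) := hOs.prod hOu
  have hfst : Tendsto (Prod.fst : Es' × Eu' → Es') (𝓝 0) (𝓝 0) := continuous_fst.tendsto _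
  have hsnd : Tendsto (Prod.snd : Es' × Eu' → Eu') (𝓝 0) (𝓝 0) := continuous_snd.tendsto _
  obtain ⟨η, hη, hηsub⟩ := nhds_basis_closedBall.mem_iff.1 (inter_mem
    (inter_mem (hO.mem_nhds ⟨h0s, h0u⟩) (g.open_source.mem_nhds hg))
    (inter_mem (hfst.eventually hAg) (hsnd.eventually hBg)))
  let H (t : ℝ) (z : Es' × Eu') : Es × Eu := g (z.1, -(t • z.2)) - g (0, (1 - t) • z.2)
  have hmem : ∀ t ∈ Icc (0 : ℝ) 1, ∀ z ∈ closedBall (0 : Es' × Eu') η,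
      (z.1, -(t • z.2)) ∈ g.source ∧ (0, (1 - t) • z.2) ∈ g.source := fun t ht z hz => by
    have hzs : ((0 : Es'), z.2) ∈ closedBall 0 η := by
      rw [mem_closedBall_zero_iff] at hz ⊢
      exact max_le (by simpa using hη.le) ((norm_snd_le z).trans hz)
    rw [← neg_smul]
    exact ⟨(hηsub (mk_smul_mem_closedBall
        (by rw [abs_neg, abs_of_nonneg ht.1]; exact ht.2) hz)).1.2,
      (hηsub (mk_smul_mem_closedBall (abs_le.2 ⟨by linarith [ht.2], by linarith [ht.1]⟩) hzs)).1.2⟩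
  obtain ⟨g', hg', hg'0, hg'eq⟩ := exists_openPartialHomeomorph_reflect_sub g hg
  refine isEssentialOn_of_local_homotopy hO (hOsb.prod hOub) ?_ (fun z hz hz0 => ?_) hη
    (fun z hz => (hηsub hz).1.1) (H := H) ?_ (fun z hz => ?_) (fun t ht z hz hz0 => ?_) g'
    hg' hg'0 (.of_forall fun z => ?_)
  · rw [closure_prod_eq]
    exact (hA.comp continuousOn_fst fun z hz => hz.1).sub
      (hB.comp continuousOn_snd fun z hz => hz.2)
  · rw [closure_prod_eq] at hz
    exact Prod.ext_iff.2 (hAB _ hz.1 _ hz.2 (sub_eq_zero.1 hz0))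
  · exact (g.continuousOn.comp (by fun_prop) fun w hw => (hmem _ hw.1 _ hw.2).1).sub
      (g.continuousOn.comp (by fun_prop) fun w hw => (hmem _ hw.1 _ hw.2).2)
  · have hAz : A z.1 = g (z.1, 0) := (hηsub hz).2.1
    have hBz : B z.2 = g (0, z.2) := (hηsub hz).2.2
    simp only [H, zero_smul, neg_zero, sub_zero, one_smul, hAz, hBz]
  · obtain ⟨hz1, hz2⟩ := Prod.ext_iff.1
      (g.injOn (hmem t ht z hz).1 (hmem t ht z hz).2 (sub_eq_zero.1 hz0))
    refine Prod.ext hz1 ?_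
    rw [sub_smul, one_smul, sub_eq_add_neg] at hz2
    exact right_eq_add.1 hz2
  · simp only [H, one_smul, sub_self, zero_smul, hg'eq, Prod.mk_zero_zero]

lemma exists_fst_eq_zero_of_crossing (hOs : IsOpen Os) (hOu : IsOpen Ou)
    (hOsb : Bornology.IsBounded Os) (hOub : Bornology.IsBounded Ou) (h0s : 0 ∈ Os) (h0u : 0 ∈ Ou)
    (hA : ContinuousOn A (closure Os)) (hB : ContinuousOn B (closure Ou))
    (g : OpenPartialHomeomorph (Es' × Eu') (Es × Eu)) (hg : 0 ∈ g.source)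
    (hAg : ∀ᶠ x in 𝓝 0, A x = g (x, 0)) (hBg : ∀ᶠ y in 𝓝 0, B y = g (0, y))
    (hAB : ∀ x ∈ closure Os, ∀ y ∈ closure Ou, A x = B y → x = 0 ∧ y = 0)
    (hfrs : ∀ x ∈ frontier Os, ∀ y ∈ closure Ou, ‖(B y).1‖ < ‖(A x).1‖)
    (hfru : ∀ x ∈ closure Os, ∀ y ∈ frontier Ou, ‖(A x).2‖ < ‖(B y).2‖) :
    ∃ x ∈ closure Os, (A x).1 = 0 := by
  have hess := isEssentialOn_sub hOs hOu hOsb hOub h0s h0u hA hB g hg hAg hBg hAB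
  let H (t : ℝ) (z : Es' × Eu') : Es × Eu :=
    ((A z.1).1 - (1 - t) • (B z.2).1, (1 - t) • (A z.1).2 - (B z.2).2)
  have hcl : closure (Os ×ˢ Ou) = closure Os ×ˢ closure Ou := closure_prod_eq
  have hAc : ContinuousOn (fun w : ℝ × (Es' × Eu') => A w.2.1) (Icc 0 1 ×ˢ closure (Os ×ˢ Ou)) :=
    hA.comp (by fun_prop) fun w hw => (hcl ▸ hw.2).1
  have hBc : ContinuousOn (fun w : ℝ × (Es' × Eu') => B w.2.2) (Icc 0 1 ×ˢ closure (Os ×ˢ Ou)) :=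
    hB.comp (by fun_prop) fun w hw => (hcl ▸ hw.2).2
  have hH : ContinuousOn (fun w : ℝ × (Es' × Eu') => H w.1 w.2)
      (Icc 0 1 ×ˢ closure (Os ×ˢ Ou)) :=
    (hAc.fst.sub (.smul (by fun_prop) hBc.fst)).prodMk (.sub (.smul (by fun_prop) hAc.snd) hBc.snd)
  obtain ⟨z, hz, hz0⟩ := hess.exists_zero_of_homotopy (hOsb.prod hOub).isCompact_closure hH
    (fun z _ => by simp [H, Prod.ext_iff]) fun t ht z hz hz0 => by
      obtain ⟨h1, h2⟩ := Prod.mk_eq_zero.1 hz0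
      have ht' : |1 - t| ≤ 1 := abs_le.2 ⟨by linarith [ht.2], by linarith [ht.1]⟩
      rw [frontier_prod_eq] at hz
      rcases hz with hz | hz
      · exact ((norm_smul_le_norm_of_abs_le_one ht' _).trans_lt (hfru _ hz.1 _ hz.2)).ne
          (congrArg norm (sub_eq_zero.1 h2))
      · exact ((norm_smul_le_norm_of_abs_le_one ht' _).trans_lt (hfrs _ hz.1 _ hz.2)).ne'
          (congrArg norm (sub_eq_zero.1 h1))
  exact ⟨z.1, (hcl ▸ hz).1, by simpa [H] using congrArg Prod.fst hz0⟩

end Product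

section InvarianceOfDomain

variable {E : Type*} [NormedAddCommGroup E] [NormedSpace ℝ E]

lemma exists_eq_center_of_dist_lt [FiniteDimensional ℝ E] {G : E → E} {x : E} {r : ℝ} (hr : 0 < r)
    (hG : ContinuousOn G (closedBall x r)) (hd : ∀ z ∈ sphere x r, dist (G z) z < r) :
    ∃ z ∈ closedBall x r, G z = x := by
  have hcl : closure (ball (0 : E) r) = closedBall 0 r := closure_ball _ hr.ne'
  have hmem : MapsTo (fun z => x + z) (closedBall 0 r) (closedBall x r) := fun z hz => by
    simpa using hz
  have hess : IsEssentialOn (id : E → E) (ball 0 r) :=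
    isEssentialOn_of_eventuallyEq isOpen_ball isBounded_ball (mem_ball_self hr) continuousOn_id
      (fun _ _ h => h) (.refl E) (mem_univ _) rfl .rfl
  have hG' : ContinuousOn (fun z => G (x + z)) (closedBall 0 r) := hG.comp (by fun_prop) hmem
  obtain ⟨z, hz, hz0⟩ := hess.exists_zero_of_homotopy
    (H := fun t z => z + t • (G (x + z) - (x + z)))
    (by rw [hcl]; exact isCompact_closedBall 0 r)
    (by
      rw [hcl]
      have : ContinuousOn (fun w : ℝ × E => G (x + w.2)) (Icc 0 1 ×ˢ closedBall 0 r) :=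
        hG'.comp continuousOn_snd fun w hw => hw.2
      exact continuousOn_snd.add (continuousOn_fst.smul (this.sub (by fun_prop))))
    (fun z _ => by simp) fun t ht z hz hz0 => by
      rw [frontier_ball _ hr.ne', mem_sphere_zero_iff_norm] at hz
      have hlt := hd (x + z) (by simpa using hz)
      rw [dist_eq_norm] at hlt
      have hle := norm_smul_le_norm_of_abs_le_one (abs_le.2 ⟨by linarith [ht.1], ht.2⟩)
        (G (x + z) - (x + z))
      rw [eq_neg_of_add_eq_zero_left hz0, norm_neg] at hz
      linarith
  rw [hcl] at hz
  refine ⟨x + z, hmem hz, ?_⟩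
  rw [one_smul] at hz0
  exact sub_eq_zero.1 (.trans (by abel) hz0)

/-- The map which pushes the points of the ball of radius `ε` about `c` along rays from `c` onto
the sphere, and fixes the other points. It is only meaningful away from `c`. -/
noncomputable def radialPush (c : E) (ε : ℝ) (y : E) : E :=
  c + max (ε / ‖y - c‖) 1 • (y - c)

lemma continuousOn_radialPush (c : E) (ε : ℝ) : ContinuousOn (radialPush c ε) {c}ᶜ :=
  continuousOn_const.add (((continuousOn_const.div (by fun_prop) fun _ hy =>
    norm_ne_zero_iff.2 (sub_ne_zero.2 hy)).sup continuousOn_const).smul (by fun_prop))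

lemma radialPush_eq_self {c y : E} {ε : ℝ} (hy : ε ≤ dist y c) : radialPush c ε y = y := by
  rw [dist_eq_norm] at hy
  rw [radialPush, max_eq_right (div_le_one_of_le₀ hy (norm_nonneg _)), one_smul, add_sub_cancel]

lemma radialPush_mem_sphere {c y : E} {ε : ℝ} (hyc : y ≠ c) (hy : dist y c ≤ ε) :
    radialPush c ε y ∈ sphere c ε := by
  rw [dist_eq_norm] at hy
  have hpos : 0 < ‖y - c‖ := norm_pos_iff.2 (sub_ne_zero.2 hyc)
  have hle : 1 ≤ ε / ‖y - c‖ := (one_le_div hpos).2 hy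
  rw [mem_sphere_iff_norm, radialPush, max_eq_left hle, add_sub_cancel_left, norm_smul,
    Real.norm_of_nonneg (zero_le_one.trans hle), div_mul_cancel₀ _ hpos.ne']

variable [FiniteDimensional ℝ E]

lemma exists_continuous_dist_lt_and_ne_on_sphere {G : E → E} (hG : Continuous G) (a c : E)
    {ε κ : ℝ} (hε : ε ≠ 0) (hκ : 0 < κ) :
    ∃ P : E → E, Continuous P ∧ (∀ y, dist (P y) (G y) < κ) ∧ ∀ y ∈ sphere c ε, P y ≠ a := by
  borelize E
  obtain ⟨Q, hQ, hQG, -⟩ := hG.exists_contDiff_approx 1 (ε := fun _ => κ / 2) continuous_const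
    fun _ => half_pos hκ
  have hnull : (Measure.addHaar : Measure E) (Q '' sphere c ε) = 0 :=
    addHaar_image_eq_zero_of_differentiableOn_of_addHaar_eq_zero _
      (hQ.differentiable one_ne_zero).differentiableOn (Measure.addHaar_sphere_of_ne_zero _ _ hε)
  obtain ⟨v, hv, hvQ⟩ : ∃ v ∈ ball a (κ / 2), v ∉ Q '' sphere c ε := not_subset.1 fun h =>
    (measure_ball_pos Measure.addHaar a (half_pos hκ)).ne' (measure_mono_null h hnull)
  refine ⟨fun y => Q y + (a - v), by fun_prop, fun y => ?_, fun y hy h => hvQ ⟨y, hy, ?_⟩⟩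
  · have h := dist_add_add_le (Q y) (a - v) (G y) 0
    rw [add_zero, dist_zero_right, ← dist_eq_norm, dist_comm a v] at h
    linarith [hQG y, mem_ball.1 hv]
  · rw [← eq_sub_iff_add_eq, sub_sub_cancel] at h
    exact h

-- If `c ∉ g '' B` is close to `g x`, push `g '' B` off `c` onto a small sphere and perturb the
-- continuous extension of `g⁻¹` so that it omits the value `x` there: the composite is then a map
-- on `B` close to the identity on the boundary which omits `x`.
lemma image_closedBall_mem_nhds {g : E → E} {x : E} {r : ℝ} (hr : 0 < r)
    (hg : ContinuousOn g (closedBall x r)) (hinj : InjOn g (closedBall x r)) :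
    g '' closedBall x r ∈ 𝓝 (g x) := by
  have hx : x ∈ closedBall x r := mem_closedBall_self hr.le
  obtain ⟨ε, hε, hsphere⟩ := (isCompact_sphere x r).exists_forall_le' (a := 0)
    (f := fun z => dist (g z) (g x))
    (continuous_dist.comp_continuousOn
      ((hg.mono sphere_subset_closedBall).prodMk continuousOn_const))
    fun z hz => dist_pos.2 fun h => hr.ne
      (by rw [← mem_sphere.1 hz, hinj (sphere_subset_closedBall hz) hx h, dist_self])
  by_contra hnot
  obtain ⟨c, hc, hcg⟩ : ∃ c ∈ ball (g x) (ε / 4), c ∉ g '' closedBall x r := not_subset.1 fun h =>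
    hnot (mem_of_superset (ball_mem_nhds _ (by positivity)) h)
  rw [mem_ball'] at hc
  obtain ⟨κ, hκ, hnear⟩ := Metric.continuousOn_iff.1 hg x hx (ε / 4) (by positivity)
  have : CompactSpace (closedBall x r) := isCompact_iff_compactSpace.1 (isCompact_closedBall x r)
  have : TietzeExtension E := .of_tvs ℝ
  obtain ⟨G, hG⟩ := ContinuousMap.exists_extension'
    (hg.domRestrict.isClosedEmbedding hinj.injective)
    (⟨Subtype.val, continuous_subtype_val⟩ : C(closedBall x r, E))
  have hGg : ∀ z ∈ closedBall x r, G (g z) = z := fun z hz => congrFun hG ⟨z, hz⟩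
  obtain ⟨P, hP, hPG, hPx⟩ := exists_continuous_dist_lt_and_ne_on_sphere G.continuous x c
    (half_pos hε).ne' (lt_min hκ hr)
  have hne : ∀ z ∈ closedBall x r, g z ≠ c := fun z hz h => hcg ⟨z, hz, h⟩
  have hfar : ∀ z ∈ closedBall x r, ε / 2 ≤ dist (g z) c →
      dist (P (radialPush c (ε / 2) (g z))) z < min κ r := fun z hz h => by
    simpa only [radialPush_eq_self h, hGg z hz] using hPG (g z)
  obtain ⟨z, hz, hzx⟩ := exists_eq_center_of_dist_lt (G := fun z => P (radialPush c (ε / 2) (g z)))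
    hr (hP.comp_continuousOn ((continuousOn_radialPush c _).comp hg hne)) fun z hz =>
      (hfar z (sphere_subset_closedBall hz) (by
        linarith [hsphere z hz, dist_triangle_right (g z) (g x) c])).trans_le (min_le_right _ _)
  rcases le_total (ε / 2) (dist (g z) c) with h | h
  · have hzκ := hfar z hz h
    rw [hzx, dist_comm] at hzκ
    linarith [hnear z hz (hzκ.trans_le (min_le_left _ _)), dist_triangle (g z) (g x) c]
  · exact hPx _ (radialPush_mem_sphere (hne z hz) h) hzx

variable {E' : Type*} [NormedAddCommGroup E'] [NormedSpace ℝ E'] [FiniteDimensional ℝ E']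

lemma isOpen_image_of_injOn (hdim : finrank ℝ E = finrank ℝ E') {g : E → E'} {U : Set E}
    (hU : IsOpen U) (hg : ContinuousOn g U) (hinj : InjOn g U) : IsOpen (g '' U) := by
  let T : E' ≃L[ℝ] E := ContinuousLinearEquiv.ofFinrankEq hdim.symm
  rw [← T.toHomeomorph.isOpen_image, ContinuousLinearEquiv.coe_toHomeomorph, ← image_comp,
    isOpen_iff_mem_nhds]
  rintro _ ⟨x, hx, rfl⟩
  obtain ⟨r, hr, hrU⟩ := nhds_basis_closedBall.mem_iff.1 (hU.mem_nhds hx)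
  exact mem_of_superset (image_closedBall_mem_nhds hr (T.continuous.comp_continuousOn (hg.mono hrU))
    (T.injective.comp_injOn (hinj.mono hrU))) (image_mono hrU)

lemma finrank_le_of_injOn {g : E → E'} {U : Set E} (hU : IsOpen U) (hne : U.Nonempty)
    (hg : ContinuousOn g U) (hinj : InjOn g U) : finrank ℝ E ≤ finrank ℝ E' := by
  by_contra! hlt
  obtain ⟨d, hd⟩ := Nat.exists_eq_add_of_lt hlt
  have hopen := isOpen_image_of_injOn (E' := E' × (Fin (d + 1) → ℝ)) (g := fun x => (g x, 0))
    (by simp [hd, add_assoc]) hU (hg.prodMk continuousOn_const)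
    fun a ha b hb hab => hinj ha hb (Prod.ext_iff.1 hab).1
  obtain ⟨x, hx⟩ := hne
  have hline :
      (fun t : ℝ => (g x, fun _ : Fin (d + 1) => t)) ⁻¹' ((fun x => (g x, 0)) '' U) = {0} :=
    Set.ext fun t => ⟨fun ⟨y, _, hy⟩ => (congrFun (Prod.ext_iff.1 hy).2 0).symm, fun ht => by
      rw [mem_singleton_iff.1 ht]
      exact ⟨x, hx, rfl⟩⟩
  exact not_isOpen_singleton (0 : ℝ) (hline ▸ hopen.preimage (by fun_prop))

end InvarianceOfDomain

section LocalCoordinates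

variable {X : Type*} [TopologicalSpace X] {E E' : Type*} [NormedAddCommGroup E] [NormedSpace ℝ E]
  [NormedAddCommGroup E'] [NormedSpace ℝ E']

section

variable [FiniteDimensional ℝ E] [FiniteDimensional ℝ E']

lemma isOpen_range_of_injective [ChartedSpace E' X] (hdim : finrank ℝ E' ≤ finrank ℝ E) {h : E → X}
    (hh : Continuous h) (hinj : Function.Injective h) : IsOpen (range h) := by
  rw [isOpen_iff_mem_nhds]
  rintro _ ⟨z, rfl⟩
  let c := chartAt E' (h z)
  let U := h ⁻¹' c.source
  have hz : h z ∈ c.source := mem_chart_source E' (h z)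
  have hU : IsOpen U := c.open_source.preimage hh
  have hcont : ContinuousOn (c ∘ h) U := c.continuousOn.comp hh.continuousOn fun _ hw => hw
  have hcinj : InjOn (c ∘ h) U := c.injOn.comp hinj.injOn fun _ hw => hw
  have hopen : IsOpen ((c ∘ h) '' U) :=
    isOpen_image_of_injOn ((finrank_le_of_injOn hU ⟨z, hz⟩ hcont hcinj).antisymm hdim)
      hU hcont hcinj
  refine mem_of_superset ((c.isOpen_inter_preimage hopen).mem_nhds ⟨hz, z, hz, rfl⟩) ?_
  rintro y ⟨hy, w, hw, hwy⟩
  exact ⟨w, c.injOn hw hy hwy⟩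

lemma isOpen_image_of_injOn_of_subset_target (hdim : finrank ℝ E = finrank ℝ E')
    (e : OpenPartialHomeomorph E X) {V : Set X} (hV : IsOpen V) (hVe : V ⊆ e.target) {g : X → E'}
    (hg : ContinuousOn g V) (hinj : InjOn g V) : IsOpen (g '' V) := by
  have hright : LeftInvOn e e.symm V := fun y hy => e.right_inv (hVe hy)
  have hmaps : MapsTo e (e.symm '' V) V := by rw [mapsTo_iff_image_subset, hright.image_image]
  have hsource : e.symm '' V ⊆ e.source := image_subset_iff.2 fun y hy => e.map_target (hVe hy)
  rw [← hright.image_image, ← image_comp]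
  exact isOpen_image_of_injOn hdim (e.symm.isOpen_image_of_subset_source hV hVe)
    (hg.comp (e.continuousOn.mono hsource) hmaps) (hinj.comp (e.injOn.mono hsource) hmaps)

lemma exists_openPartialHomeomorph_of_injOn (hdim : finrank ℝ E = finrank ℝ E')
    (e : OpenPartialHomeomorph E X) {V : Set X} (hV : IsOpen V) (hVe : V ⊆ e.target) {g : X → E'}
    (hg : ContinuousOn g V) (hinj : InjOn g V) :
    ∃ G : OpenPartialHomeomorph X E', G.source = V ∧ G = g := by
  have : Nonempty X := ⟨e 0⟩
  refine ⟨.ofContinuousOpenRestrict (hinj.toPartialEquiv g V) hg (fun O hO => ?_) hV, rfl, rfl⟩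
  have hOV : Subtype.val '' O ⊆ V := Subtype.coe_image_subset V O
  rw [domRestrict_eq, image_comp]
  exact isOpen_image_of_injOn_of_subset_target hdim e (hV.isOpenMap_subtype_val O hO)
    (hOV.trans hVe) (hg.mono hOV) (hinj.mono hOV)

end

lemma exists_isEmbedding_prod (G : OpenPartialHomeomorph X (E × E')) {p : X} (hp : p ∈ G.source) :
    ∃ (h : E × E' → X) (a : E → E) (b : E' → E'), IsEmbedding h ∧ p ∈ range h ∧
      range h ⊆ G.source ∧ Function.Injective a ∧ Function.Injective b ∧
      ∀ z, G (h z) = (a z.1, b z.2) := by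
  obtain ⟨r, hr, hball⟩ := Metric.mem_nhds_iff.1 (G.open_target.mem_nhds (G.map_source hp))
  let A := OpenPartialHomeomorph.univBall (G p).1 r
  let B := OpenPartialHomeomorph.univBall (G p).2 r
  have hA : A.source = univ := OpenPartialHomeomorph.univBall_source _ _
  have hB : B.source = univ := OpenPartialHomeomorph.univBall_source _ _
  have htgt : ∀ z : E × E', (A z.1, B z.2) ∈ G.target := fun z => by
    refine hball ?_
    rw [← Prod.mk.eta (p := G p), ← ball_prod_same, ← OpenPartialHomeomorph.univBall_target _ hr,
      ← OpenPartialHomeomorph.univBall_target _ hr]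
    exact ⟨A.map_source (hA ▸ mem_univ _), B.map_source (hB ▸ mem_univ _)⟩
  let P := (A.prod B).trans G.symm
  have hP : P.source = univ := eq_univ_of_forall fun z =>
    ⟨⟨hA ▸ mem_univ _, hB ▸ mem_univ _⟩, htgt z⟩
  refine ⟨P, A, B, (P.isOpenEmbedding hP).isEmbedding, ⟨0, ?_⟩, ?_,
    injOn_univ.1 (hA ▸ A.injOn), injOn_univ.1 (hB ▸ B.injOn), fun z => G.right_inv (htgt z)⟩
  · change G.symm (A 0, B 0) = p
    rw [OpenPartialHomeomorph.univBall_apply_zero, OpenPartialHomeomorph.univBall_apply_zero,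
      Prod.mk.eta, G.left_inv hp]
  · rintro _ ⟨z, rfl⟩
    exact G.map_target (htgt z)

end LocalCoordinates
section Iterates

variable (f : M ≃ₜ M)

lemma iterZ_zero (x : M) : iterZ f 0 x = x := rfl

lemma iterZ_one (x : M) : iterZ f 1 x = f x := rfl

lemma iterZ_add (j k : ℤ) (x : M) : iterZ f (j + k) x = iterZ f j (iterZ f k x) := by
  simp [iterZ, zpow_add]

lemma iterZ_symm (k : ℤ) (x : M) : iterZ f.symm k x = iterZ f (-k) x := by
  rw [iterZ, iterZ, zpow_neg, ← inv_zpow]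
  rfl

lemma iterZ_neg_iterZ (k : ℤ) (x : M) : iterZ f (-k) (iterZ f k x) = x := by
  rw [← iterZ_add, neg_add_cancel, iterZ_zero]

lemma iterZ_injective (k : ℤ) : Function.Injective (iterZ f k) :=
  (f.toEquiv ^ k).injective

lemma continuous_iterZ (k : ℤ) : Continuous (iterZ f k) := by
  induction k using Int.induction_on with
  | zero => exact continuous_id
  | succ k ih => exact (ih.comp f.continuous).congr fun x => (iterZ_add f k 1 x).symm
  | pred k ih =>
    rw [sub_eq_add_neg]
    exact (ih.comp f.symm.continuous).congr fun x => by
      rw [iterZ_add, ← iterZ_symm f 1, iterZ_one, Function.comp_apply]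

lemma WsLoc_symm (ε : ℝ) (x : M) : WsLoc f.symm ε x = WuLoc f ε x := by
  ext y
  simp only [WsLoc, WuLoc, mem_ofPred_eq, iterZ_symm]
  exact ⟨fun h k hk => by simpa using h (-k) (by lia), fun h k hk => h (-k) (by lia)⟩

lemma WuLoc_symm (ε : ℝ) (x : M) : WuLoc f.symm ε x = WsLoc f ε x :=
  (WsLoc_symm f.symm ε x).symm

lemma isClosed_setOf_snd_mem_WsLoc (ε : ℝ) : IsClosed {z : M × M | z.2 ∈ WsLoc f ε z.1} := by
  have : {z : M × M | z.2 ∈ WsLoc f ε z.1} =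
      ⋂ (k : ℤ) (_ : 0 ≤ k), {z | dist (iterZ f k z.1) (iterZ f k z.2) ≤ ε} := by
    ext z
    simp [WsLoc]
  rw [this]
  exact isClosed_iInter fun k => isClosed_iInter fun _ => isClosed_le
    (((continuous_iterZ f k).comp continuous_fst).dist ((continuous_iterZ f k).comp continuous_snd))
    continuous_const

lemma isClosed_WsLoc (ε : ℝ) (x : M) : IsClosed (WsLoc f ε x) :=
  (isClosed_setOf_snd_mem_WsLoc f ε).preimage (Continuous.prodMk_right x)

lemma isClosed_setOf_exists_mem_WsLoc {K : Set M} (hK : IsCompact K) (ε : ℝ) :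
    IsClosed {x | ∃ y ∈ K, y ∈ WsLoc f ε x} := by
  have : CompactSpace K := isCompact_iff_compactSpace.1 hK
  have hcl : IsClosed {z : M × K | (z.2 : M) ∈ WsLoc f ε z.1} :=
    (isClosed_setOf_snd_mem_WsLoc f ε).preimage (continuous_id.prodMap continuous_subtype_val)
  convert isClosedMap_fst_of_compactSpace _ hcl using 1
  ext x
  simp

end Iterates

section LocalSets

variable {f : M ≃ₜ M} {α ε ε' : ℝ} {x y z : M}

lemma mem_WsLoc_self (hε : 0 ≤ ε) (x : M) : x ∈ WsLoc f ε x := fun k _ => by rwa [dist_self]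

lemma WsLoc_mono (h : ε ≤ ε') : WsLoc f ε x ⊆ WsLoc f ε' x := fun _ hy k hk => (hy k hk).trans h

lemma WuLoc_mono (h : ε ≤ ε') : WuLoc f ε x ⊆ WuLoc f ε' x := fun _ hy k hk => (hy k hk).trans h

lemma mem_WsLoc_comm : y ∈ WsLoc f ε x ↔ x ∈ WsLoc f ε y := by
  simp only [WsLoc, mem_ofPred_eq, dist_comm]

lemma mem_WsLoc_trans (hy : y ∈ WsLoc f ε x) (hz : z ∈ WsLoc f ε' y) :
    z ∈ WsLoc f (ε + ε') x :=
  fun k hk => (dist_triangle _ _ _).trans (add_le_add (hy k hk) (hz k hk))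

lemma iterZ_mem_WsLoc (hy : y ∈ WsLoc f ε x) {k : ℤ} (hk : 0 ≤ k) :
    iterZ f k y ∈ WsLoc f ε (iterZ f k x) := fun j hj => by
  rw [← iterZ_add, ← iterZ_add]
  exact hy _ (add_nonneg hj hk)

lemma IsExpansive.symm (hexp : IsExpansive f α) : IsExpansive f.symm α := fun x y hxy => by
  obtain ⟨k, hk⟩ := hexp x y hxy
  exact ⟨-k, by rwa [iterZ_symm, iterZ_symm, neg_neg]⟩

lemma IsExpansive.eq_of_mem_WsLoc_of_mem_WuLoc (hexp : IsExpansive f α)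
    (hs : y ∈ WsLoc f α x) (hu : y ∈ WuLoc f α x) : x = y := by
  by_contra hne
  obtain ⟨k, hk⟩ := hexp x y hne
  rcases le_total 0 k with h | h
  · exact hk.not_ge (hs k h)
  · exact hk.not_ge (hu k h)

lemma IsExpansive.exists_forall_dist_lt [CompactSpace M] (hexp : IsExpansive f α) {η : ℝ}
    (hη : 0 < η) :
    ∃ N : ℕ, ∀ x y, (∀ k : ℤ, |k| ≤ N → dist (iterZ f k x) (iterZ f k y) ≤ α) → dist x y < η := by
  let U : ℕ → Set (M × M) := fun N =>
    {z | dist z.1 z.2 < η} ∪ ⋃ (k : ℤ) (_ : |k| ≤ N), {z | α < dist (iterZ f k z.1) (iterZ f k z.2)}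
  have hU : ∀ N, IsOpen (U N) := fun N => (isOpen_lt continuous_dist continuous_const).union <|
    isOpen_biUnion fun k _ => isOpen_lt continuous_const <|
      ((continuous_iterZ f k).comp continuous_fst).dist ((continuous_iterZ f k).comp continuous_snd)
  have hmono : Monotone U := fun m n hmn => union_subset_union_right _ <|
    biUnion_subset_biUnion_left fun k (hk : |k| ≤ m) => hk.trans (by exact_mod_cast hmn)
  have hcover : univ ⊆ ⋃ N, U N := fun z _ => by
    rw [mem_iUnion]
    by_cases hz : z.1 = z.2
    · exact ⟨0, .inl (by simpa [hz] using hη)⟩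
    · obtain ⟨k, hk⟩ := hexp _ _ hz
      exact ⟨k.natAbs, .inr (mem_iUnion₂.2 ⟨k, by simp, hk⟩)⟩
  obtain ⟨N, hN⟩ := isCompact_univ.elim_directed_cover U hU hcover hmono.directed_le
  refine ⟨N, fun x y h => (hN (mem_univ (x, y))).resolve_right fun hfar => ?_⟩
  obtain ⟨k, hk, hlt⟩ := mem_iUnion₂.1 hfar
  exact (h k hk).not_gt hlt

lemma exists_forall_dist_iterZ_lt [CompactSpace M] (f : M ≃ₜ M) (N : ℕ) (hε : 0 < ε) :
    ∃ δ > 0, ∀ x y, dist x y < δ → ∀ k : ℤ, 0 ≤ k → k ≤ N →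
      dist (iterZ f k x) (iterZ f k y) < ε := by
  have h : ∀ᶠ δ in 𝓝[>] (0 : ℝ), ∀ k ∈ Icc (0 : ℤ) N, ∀ x y, dist x y < δ →
      dist (iterZ f k x) (iterZ f k y) < ε := by
    rw [eventually_all_finite (finite_Icc _ _)]
    intro k _
    obtain ⟨δ, hδ, h⟩ := uniformContinuous_iff.1
      (CompactSpace.uniformContinuous_of_continuous (continuous_iterZ f k)) ε hε
    filter_upwards [Ioo_mem_nhdsGT hδ] with δ' hδ' x y hxy using h (hxy.trans hδ'.2)
  obtain ⟨δ, h, hδ⟩ := (h.and self_mem_nhdsWithin).exists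
  exact ⟨δ, hδ, fun x y hxy k hk hkN => h k ⟨hk, hkN⟩ x y hxy⟩

lemma IsExpansive.exists_dist_lt_of_mem_WsLoc [CompactSpace M] (hexp : IsExpansive f α)
    (hε : 0 < ε) (hεα : ε ≤ α) :
    ∃ δ > 0, ∀ x y, dist x y < δ → y ∈ WsLoc f ε x →
      ∀ k : ℤ, 0 ≤ k → dist (iterZ f k x) (iterZ f k y) < ε := by
  obtain ⟨N, hN⟩ := hexp.exists_forall_dist_lt hε
  obtain ⟨δ, hδ, h⟩ := exists_forall_dist_iterZ_lt f N hε
  refine ⟨δ, hδ, fun x y hxy hy k hk => ?_⟩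
  rcases le_total k N with hkN | hkN
  · exact h x y hxy k hk hkN
  · refine hN _ _ fun j hj => ?_
    rw [← iterZ_add, ← iterZ_add]
    exact (hy (j + k) (by linarith [neg_le_of_abs_le hj])).trans hεα

end LocalSets

section HalfPowers

variable {E : Type*} [NormedAddCommGroup E]

lemma norm_le_two_pow_ceil (x : E) : ‖x‖ ≤ 2 ^ ⌈‖x‖⌉₊ :=
  (Nat.le_ceil _).trans (by exact_mod_cast Nat.lt_two_pow_self.le)

variable [NormedSpace ℝ E]

lemma norm_half_pow_smul (m : ℕ) (x : E) : ‖(1 / 2 : ℝ) ^ m • x‖ = ‖x‖ / 2 ^ m := by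
  rw [norm_smul, norm_pow, Real.norm_of_nonneg (by norm_num), one_div, inv_pow, inv_mul_eq_div]

lemma norm_half_pow_smul_le (m : ℕ) (x : E) : ‖(1 / 2 : ℝ) ^ m • x‖ ≤ ‖x‖ := by
  rw [norm_half_pow_smul]
  exact div_le_self (norm_nonneg x) (one_le_pow₀ one_le_two)

lemma norm_half_pow_smul_le_one {m : ℕ} {x : E} (hx : ‖x‖ ≤ 2 ^ m) :
    ‖(1 / 2 : ℝ) ^ m • x‖ ≤ 1 := by
  rw [norm_half_pow_smul]
  exact div_le_one_of_le₀ hx (by positivity)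

lemma eq_zero_of_forall_norm_two_pow_smul_le {b : E} {c : ℝ}
    (h : ∀ m : ℕ, ‖(2 : ℝ) ^ m • b‖ ≤ c) : b = 0 := by
  by_contra hne
  obtain ⟨m, hm⟩ := pow_unbounded_of_one_lt (c / ‖b‖) (one_lt_two (α := ℝ))
  rw [div_lt_iff₀ (norm_pos_iff.2 hne)] at hm
  have hle := h m
  rw [norm_smul, norm_pow, Real.norm_ofNat] at hle
  exact hm.not_ge hle

end HalfPowers

/-- Linearising coordinates for `f` at the periodic point `p`: on the closed unit ball, in
which the coordinates are defined, the iterate `f ^ period` reads `(a, b) ↦ (a / 2, 2 b)`. The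
radius `1` is a normalisation, obtained by rescaling. -/
structure HyperbolicChart (f : M ≃ₜ M) (p : M) (Es Eu : Type*) [NormedAddCommGroup Es]
    [NormedSpace ℝ Es] [NormedAddCommGroup Eu] [NormedSpace ℝ Eu] where
  period : ℕ
  one_le_period : 1 ≤ period
  chart : OpenPartialHomeomorph (Es × Eu) M
  closedBall_subset_source : closedBall 0 1 ⊆ chart.source
  chart_zero : chart 0 = p
  iterZ_chart : ∀ (a : Es) (b : Eu), ‖a‖ ≤ 1 → ‖b‖ ≤ 1 / 2 →
    iterZ f period (chart (a, b)) = chart ((1 / 2 : ℝ) • a, (2 : ℝ) • b)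

namespace HyperbolicChart

variable {Es Eu : Type*} [NormedAddCommGroup Es] [NormedSpace ℝ Es] [NormedAddCommGroup Eu]
  [NormedSpace ℝ Eu] {f : M ≃ₜ M} {p : M} (C : HyperbolicChart f p Es Eu)

lemma mem_source {a : Es} {b : Eu} (ha : ‖a‖ ≤ 1) (hb : ‖b‖ ≤ 1) : (a, b) ∈ C.chart.source :=
  C.closedBall_subset_source (mem_closedBall_zero_iff.2 (max_le ha hb))

lemma zero_mem_source : 0 ∈ C.chart.source :=
  C.closedBall_subset_source (mem_closedBall_self zero_le_one)

lemma closedBall_subset_source_of_le {ρ : ℝ} (hρ : ρ ≤ 1) : closedBall 0 ρ ⊆ C.chart.source :=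
  (closedBall_subset_closedBall hρ).trans C.closedBall_subset_source

lemma image_mem_nhds {s : Set (Es × Eu)} (hs : s ∈ 𝓝 0) : C.chart '' s ∈ 𝓝 p := by
  simpa only [C.chart_zero] using C.chart.image_mem_nhds C.zero_mem_source hs

lemma tendsto_chart : Tendsto C.chart (𝓝 0) (𝓝 p) := by
  simpa only [C.chart_zero] using (C.chart.continuousAt C.zero_mem_source).tendsto

lemma iterZ_period : iterZ f C.period p = p := by
  simpa [← Prod.zero_eq_mk, C.chart_zero] using C.iterZ_chart 0 0 (by simp) (by simp)

lemma iterZ_period_mul (m : ℕ) : iterZ f (C.period * m) p = p := by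
  induction m with
  | zero => rw [Nat.cast_zero, mul_zero, iterZ_zero]
  | succ m ih => rw [Nat.cast_succ, mul_add, mul_one, iterZ_add, C.iterZ_period, ih]

lemma iterZ_period_mul_chart {a : Es} (ha : ‖a‖ ≤ 1) (m : ℕ) :
    iterZ f (C.period * m) (C.chart (a, 0)) = C.chart ((1 / 2 : ℝ) ^ m • a, 0) := by
  induction m with
  | zero => simp [iterZ_zero]
  | succ m ih =>
    rw [Nat.cast_succ, mul_add, mul_one, add_comm, iterZ_add, ih,
      C.iterZ_chart _ _ ((norm_half_pow_smul_le m a).trans ha) (by simp), smul_smul, smul_zero,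
      pow_succ']

/-- The same coordinates, with the two factors swapped, linearise the inverse map. -/
noncomputable def symm : HyperbolicChart f.symm p Eu Es where
  period := C.period
  one_le_period := C.one_le_period
  chart := (Homeomorph.prodComm Eu Es).toOpenPartialHomeomorph.trans C.chart
  closedBall_subset_source := fun z hz => by
    rw [mem_closedBall_zero_iff] at hz
    simpa [Prod.swap] using C.mem_source ((norm_snd_le z).trans hz) ((norm_fst_le z).trans hz)
  chart_zero := C.chart_zero
  iterZ_chart := fun b a hb ha => by
    have h := C.iterZ_chart ((2 : ℝ) • a) ((1 / 2 : ℝ) • b)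
      (by rw [norm_smul, Real.norm_ofNat]; linarith)
      (by rw [norm_smul, Real.norm_of_nonneg (by norm_num)]; linarith)
    rw [smul_smul, smul_smul, one_div_mul_cancel two_ne_zero, mul_one_div_cancel two_ne_zero,
      one_smul, one_smul] at h
    rw [iterZ_symm]
    exact (congrArg (iterZ f (-C.period)) h).symm.trans (iterZ_neg_iterZ f _ _)

lemma symm_image_swap_preimage (s : Set (Es × Eu)) :
    C.symm.chart '' (Prod.swap ⁻¹' s) = C.chart '' s := by
  change (C.chart ∘ Prod.swap) '' _ = _
  rw [image_comp, image_preimage_eq _ Prod.swap_surjective]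

lemma two_smul_snd_eq_of_iterZ_chart_eq {z z' : Es × Eu} (hz : z ∈ closedBall 0 (1 / 2))
    (hz' : z' ∈ closedBall 0 1) (h : iterZ f C.period (C.chart z) = C.chart z') :
    (2 : ℝ) • z.2 = z'.2 := by
  obtain ⟨h1, h2⟩ := norm_prod_le_iff.1 (mem_closedBall_zero_iff.1 hz)
  rw [← Prod.mk.eta (p := z), C.iterZ_chart _ _ (by linarith) h2] at h
  refine (Prod.ext_iff.1 (C.chart.injOn (C.mem_source ?_ ?_)
    (C.closedBall_subset_source hz') h)).2
  · rw [norm_smul, Real.norm_of_nonneg (by norm_num)]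
    linarith
  · rw [norm_smul, Real.norm_ofNat]
    linarith

lemma exists_forall_mem_WsLoc_mem_axis : ∃ ε > 0, ∀ y ∈ WsLoc f ε p,
    ∃ a : Es, ‖a‖ ≤ 1 ∧ C.chart (a, 0) = y := by
  obtain ⟨ε, hε, hball⟩ := nhds_basis_closedBall.mem_iff.1
    (C.image_mem_nhds (closedBall_mem_nhds 0 (one_half_pos (α := ℝ))))
  refine ⟨ε, hε, fun y hy => ?_⟩
  have hstay : ∀ m : ℕ, iterZ f (C.period * m) y ∈ C.chart '' closedBall 0 (1 / 2) := fun m => by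
    refine hball (mem_closedBall'.2 ?_)
    simpa only [C.iterZ_period_mul] using hy (C.period * m) (by positivity)
  choose z hz hzy using hstay
  have hdouble : ∀ m, (2 : ℝ) • (z m).2 = (z (m + 1)).2 := fun m =>
    C.two_smul_snd_eq_of_iterZ_chart_eq (hz m)
      (closedBall_subset_closedBall (by norm_num) (hz (m + 1))) <| by
        rw [hzy, hzy, ← iterZ_add, Nat.cast_succ, mul_add, mul_one, add_comm]
  have hpow : ∀ m, (z m).2 = (2 : ℝ) ^ m • (z 0).2 := fun m => by
    induction m with
    | zero => rw [pow_zero, one_smul]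
    | succ m ih => rw [← hdouble, ih, smul_smul, pow_succ']
  have hz0 : (z 0).2 = 0 := eq_zero_of_forall_norm_two_pow_smul_le (c := 1 / 2) fun m => by
    rw [← hpow]
    exact (norm_snd_le _).trans (mem_closedBall_zero_iff.1 (hz m))
  refine ⟨(z 0).1, (norm_fst_le _).trans
    ((mem_closedBall_zero_iff.1 (hz 0)).trans (by norm_num)), ?_⟩
  rw [← hz0, Prod.mk.eta, hzy, Nat.cast_zero, mul_zero, iterZ_zero]

lemma exists_forall_chart_mem_WsLoc {ε : ℝ} (hε : 0 < ε) :
    ∃ ρ > 0, ρ ≤ 1 ∧ ∀ a : Es, ‖a‖ ≤ ρ → C.chart (a, 0) ∈ WsLoc f ε p := by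
  have haxis : Tendsto (fun a : Es => C.chart (a, 0)) (𝓝 0) (𝓝 p) :=
    C.tendsto_chart.comp (Continuous.tendsto' (by fun_prop) _ _ rfl)
  have hev : ∀ᶠ a : Es in 𝓝 0, ∀ i < C.period,
      dist (iterZ f i p) (iterZ f i (C.chart (a, 0))) < ε :=
    (eventually_all_finite (finite_lt_nat _)).2 fun i _ => by
      have h := ((continuous_iterZ f i).tendsto p).comp haxis
      simpa only [dist_comm, Function.comp_apply] using Metric.tendsto_nhds.1 h ε hε
  obtain ⟨r, hr, hball⟩ := nhds_basis_closedBall.mem_iff.1 hev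
  refine ⟨min r 1, lt_min hr one_pos, min_le_right _ _, fun a ha k hk => ?_⟩
  lift k to ℕ using hk
  rw [← Nat.mod_add_div k C.period, Nat.cast_add, Nat.cast_mul, iterZ_add, iterZ_add,
    C.iterZ_period_mul, C.iterZ_period_mul_chart (ha.trans (min_le_right _ _))]
  have hmem := mem_closedBall_zero_iff.2
    ((norm_half_pow_smul_le (k / C.period) a).trans (ha.trans (min_le_left _ _)))
  exact (hball hmem _ (Nat.mod_lt _ C.one_le_period)).le

/-- The parametrization of the global stable set of `p` which extends the stable coordinate axis
equivariantly. The number `⌈‖x‖⌉₊` of halvings brings `x` into the unit ball; by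
`stableParam_eq`, any larger number gives the same value. -/
noncomputable def stableParam (x : Es) : M :=
  iterZ f (-(C.period * ⌈‖x‖⌉₊)) (C.chart ((1 / 2 : ℝ) ^ ⌈‖x‖⌉₊ • x, 0))

variable {C}

lemma iterZ_chart_half_pow_add {m : ℕ} {x : Es} (hx : ‖x‖ ≤ 2 ^ m) (j : ℕ) :
    iterZ f (-(C.period * (m + j : ℕ))) (C.chart ((1 / 2 : ℝ) ^ (m + j) • x, 0)) =
      iterZ f (-(C.period * m)) (C.chart ((1 / 2 : ℝ) ^ m • x, 0)) := by
  rw [add_comm m j, pow_add, mul_smul,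
    ← C.iterZ_period_mul_chart (norm_half_pow_smul_le_one hx), ← iterZ_add]
  congr 1
  push_cast
  ring

lemma stableParam_eq {m : ℕ} {x : Es} (hx : ‖x‖ ≤ 2 ^ m) :
    C.stableParam x = iterZ f (-(C.period * m)) (C.chart ((1 / 2 : ℝ) ^ m • x, 0)) := by
  rw [← iterZ_chart_half_pow_add hx ⌈‖x‖⌉₊, add_comm,
    iterZ_chart_half_pow_add (norm_le_two_pow_ceil x), stableParam]

lemma stableParam_of_norm_le_one {x : Es} (hx : ‖x‖ ≤ 1) : C.stableParam x = C.chart (x, 0) := by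
  rw [stableParam_eq (m := 0) (by simpa using hx)]
  simp [iterZ_zero]

lemma eventually_stableParam_eq (C : HyperbolicChart f p Es Eu) :
    ∀ᶠ x in 𝓝 0, C.stableParam x = C.chart (x, 0) := by
  filter_upwards [closedBall_mem_nhds 0 one_pos] with x hx
  exact stableParam_of_norm_le_one (mem_closedBall_zero_iff.1 hx)

lemma stableParam_zero : C.stableParam 0 = p := by
  rw [stableParam_of_norm_le_one (by simp), ← Prod.zero_eq_mk, C.chart_zero]

lemma iterZ_stableParam (m : ℕ) (x : Es) :
    iterZ f (C.period * m) (C.stableParam x) = C.stableParam ((1 / 2 : ℝ) ^ m • x) := by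
  set k := ⌈‖x‖⌉₊
  have hk : ‖x‖ ≤ 2 ^ k := norm_le_two_pow_ceil x
  rw [stableParam_eq (hk.trans (pow_le_pow_right₀ one_le_two (Nat.le_add_right k m))),
    stableParam_eq ((norm_half_pow_smul_le m x).trans hk), ← iterZ_add, smul_smul, ← pow_add]
  congr 1
  push_cast
  ring

lemma continuous_stableParam : Continuous C.stableParam := by
  refine continuous_iff_continuousAt.2 fun x => ?_
  obtain ⟨m, hm⟩ := pow_unbounded_of_one_lt ‖x‖ (one_lt_two (α := ℝ))
  have heq : C.stableParam =ᶠ[𝓝 x]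
      fun y => iterZ f (-(C.period * m)) (C.chart ((1 / 2 : ℝ) ^ m • y, 0)) := by
    filter_upwards [continuous_norm.continuousAt.eventually (gt_mem_nhds hm)] with y hy
    exact stableParam_eq hy.le
  refine ContinuousAt.congr ((continuous_iterZ f _).continuousAt.comp ?_) heq.symm
  exact ContinuousAt.comp (f := fun y : Es => ((1 / 2 : ℝ) ^ m • y, (0 : Eu)))
    (C.chart.continuousAt (C.mem_source (norm_half_pow_smul_le_one hm.le) (by simp)))
    (by fun_prop)

lemma stableParam_injective : Function.Injective C.stableParam := fun x y hxy => by
  obtain ⟨m, hm⟩ := pow_unbounded_of_one_lt (max ‖x‖ ‖y‖) (one_lt_two (α := ℝ))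
  have hx := (le_max_left _ _).trans hm.le
  have hy := (le_max_right _ _).trans hm.le
  rw [stableParam_eq hx, stableParam_eq hy] at hxy
  have h := C.chart.injOn (C.mem_source (norm_half_pow_smul_le_one hx) (by simp))
    (C.mem_source (norm_half_pow_smul_le_one hy) (by simp)) (iterZ_injective f _ hxy)
  exact smul_right_injective Es (by positivity) (Prod.ext_iff.1 h).1

variable (C)

/-- The scale `ε` is adapted to the chart if the `ε`-local stable and unstable sets of the
base point lie on the coordinate axes. -/
structure IsAdapted (ε : ℝ) : Prop where
  stable : ∀ y ∈ WsLoc f ε p, ∃ a : Es, ‖a‖ ≤ 1 ∧ C.chart (a, 0) = y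
  unstable : ∀ y ∈ WuLoc f ε p, ∃ b : Eu, ‖b‖ ≤ 1 ∧ C.chart (0, b) = y

variable {C} in
lemma IsAdapted.symm {ε : ℝ} (h : C.IsAdapted ε) : C.symm.IsAdapted ε where
  stable := by
    rw [WsLoc_symm]
    exact h.unstable
  unstable := by
    rw [WuLoc_symm]
    exact h.stable

lemma exists_isAdapted {ε₁ : ℝ} (hε₁ : 0 < ε₁) : ∃ ε > 0, ε ≤ ε₁ ∧ C.IsAdapted ε := by
  obtain ⟨εs, hεs, hs⟩ := C.exists_forall_mem_WsLoc_mem_axis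
  obtain ⟨εu, hεu, hu⟩ := C.symm.exists_forall_mem_WsLoc_mem_axis
  rw [WsLoc_symm] at hu
  exact ⟨min ε₁ (min εs εu), lt_min hε₁ (lt_min hεs hεu), min_le_left _ _,
    fun y hy => hs y (WsLoc_mono ((min_le_right _ _).trans (min_le_left _ _)) hy),
    fun y hy => hu y (WuLoc_mono ((min_le_right _ _).trans (min_le_right _ _)) hy)⟩

end HyperbolicChart

section HyperbolicPoints

lemma exists_openPartialHomeomorph_of_homeomorph {X Y : Type*} [TopologicalSpace X]
    [TopologicalSpace Y] {U : Set X} {V : Set Y} (hU : IsOpen U) (hV : IsOpen V) (h : U ≃ₜ V)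
    (hne : U.Nonempty) :
    ∃ e : OpenPartialHomeomorph X Y, e.source = U ∧ ∀ z (hz : z ∈ U), e z = h ⟨z, hz⟩ := by
  have : Nonempty U := hne.to_subtype
  let i := hU.isOpenEmbedding_subtypeVal.toOpenPartialHomeomorph (Subtype.val : U → X)
  let j := (hV.isOpenEmbedding_subtypeVal.comp h.isOpenEmbedding).toOpenPartialHomeomorph _
  refine ⟨i.symm.trans j, by simp [i, j], fun z hz => ?_⟩
  have hiz : i.symm z = ⟨z, hz⟩ := i.left_inv (x := ⟨z, hz⟩) (mem_univ _)
  rw [OpenPartialHomeomorph.coe_trans, Function.comp_apply, hiz]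
  rfl

variable {f : M ≃ₜ M} {p : M}

lemma nonempty_hyperbolicChart_of_conj {Es Eu : Type*} [NormedAddCommGroup Es] [NormedSpace ℝ Es]
    [NormedAddCommGroup Eu] [NormedSpace ℝ Eu] {l : ℕ} (hl : 1 ≤ l) (hper : iterZ f l p = p)
    (e : OpenPartialHomeomorph M (Es × Eu)) (hp : p ∈ e.source) (hp0 : e p = 0)
    (hconj : ∀ z ∈ e.source, iterZ f l z ∈ e.source →
      e (iterZ f l z) = ((1 / 2 : ℝ) • (e z).1, (2 : ℝ) • (e z).2)) :
    Nonempty (HyperbolicChart f p Es Eu) := by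
  have h0 : 0 ∈ e.target := hp0 ▸ e.map_source hp
  have hsymm0 : e.symm 0 = p := hp0 ▸ e.left_inv hp
  have hreturn : ∀ᶠ w in 𝓝 0, w ∈ e.target ∧ iterZ f l (e.symm w) ∈ e.source :=
    (e.open_target.eventually_mem h0).and <|
      ((continuous_iterZ f l).continuousAt.comp (e.continuousAt_symm h0)).eventually
        (e.open_source.eventually_mem (by rwa [Function.comp_apply, hsymm0, hper]))
  obtain ⟨ρ, hρ, hball⟩ := nhds_basis_closedBall.mem_iff.1 hreturn
  have hmem : ∀ z : Es × Eu, ‖z‖ ≤ 1 → ρ • z ∈ closedBall 0 ρ := fun z hz => by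
    rw [mem_closedBall_zero_iff, norm_smul, Real.norm_of_nonneg hρ.le]
    exact mul_le_of_le_one_right hρ.le hz
  refine ⟨⟨l, hl, (Homeomorph.smulOfNeZero ρ hρ.ne').toOpenPartialHomeomorph.trans e.symm,
    fun z hz => ⟨trivial, (hball (hmem z (mem_closedBall_zero_iff.1 hz))).1⟩,
    (congrArg e.symm (smul_zero ρ)).trans hsymm0, fun a b ha hb => ?_⟩⟩
  obtain ⟨ht, hs⟩ := hball (hmem (a, b) (max_le ha (hb.trans (by norm_num))))
  change iterZ f l (e.symm (ρ • (a, b))) = e.symm (ρ • ((1 / 2 : ℝ) • a, (2 : ℝ) • b))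
  rw [← e.left_inv hs, hconj _ (e.map_target ht) hs, e.right_inv ht, Prod.smul_mk, Prod.smul_mk,
    smul_comm, smul_comm (2 : ℝ)]

lemma nonempty_hyperbolicChart_of_mem_PerHr {n r : ℕ} (hp : p ∈ PerHr f n r) :
    Nonempty (HyperbolicChart f p (Fin r → ℝ) (Fin (n - r) → ℝ)) := by
  obtain ⟨l, hl, hper, U, V, h, hU, hV, -, hpU, hp0, hconj⟩ := hp
  obtain ⟨e, rfl, heq⟩ := exists_openPartialHomeomorph_of_homeomorph hU hV h ⟨p, hpU⟩
  refine nonempty_hyperbolicChart_of_conj hl hper e hpU ((heq p hpU).trans hp0)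
    fun z hz hz' => ?_
  have hiter : (f.toEquiv ^ l) z = iterZ f l z := by rw [iterZ, zpow_natCast]
  have hzl := hconj z hz (hiter ▸ hz')
  simp only [hiter] at hzl
  rw [heq z hz, heq _ hz', hzl]
  ext i <;> simp [modelL, div_eq_inv_mul]

/-- The points at which `f` admits a hyperbolic chart, of unconstrained dimension. -/
def hyperbolicPoints (f : M ≃ₜ M) : Set M :=
  {q | ∃ r s : ℕ, Nonempty (HyperbolicChart f q (Fin r → ℝ) (Fin s → ℝ))}

lemma hyperbolicPoints_symm (f : M ≃ₜ M) : hyperbolicPoints f.symm = hyperbolicPoints f :=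
  Set.ext fun _ => ⟨fun ⟨r, s, ⟨C⟩⟩ => ⟨s, r, ⟨C.symm⟩⟩, fun ⟨r, s, ⟨C⟩⟩ => ⟨s, r, ⟨C.symm⟩⟩⟩

lemma PerH_subset_hyperbolicPoints (f : M ≃ₜ M) (n : ℕ) : PerH f n ⊆ hyperbolicPoints f :=
  iUnion₂_subset fun r _ _ hq => ⟨r, n - r, nonempty_hyperbolicChart_of_mem_PerHr hq⟩

end HyperbolicPoints

section Halving

variable {E : Type*} [NormedAddCommGroup E] [NormedSpace ℝ E] {A : Set E}

lemma exists_two_pow_smul_mem_of_not_isBounded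
    (hhalf : ∀ x ∈ A, ∀ m : ℕ, (1 / 2 : ℝ) ^ m • x ∈ A) (hA : ¬ Bornology.IsBounded A) (i : ℕ) :
    ∃ x : E, 1 / 2 ≤ ‖x‖ ∧ ‖x‖ ≤ 1 ∧ (2 : ℝ) ^ i • x ∈ A := by
  obtain ⟨x, hxA, hx⟩ : ∃ x ∈ A, (2 : ℝ) ^ i < ‖x‖ := by
    by_contra! h
    exact hA (isBounded_iff_forall_norm_le.2 ⟨_, h⟩)
  obtain ⟨m, hm, hm'⟩ := exists_nat_pow_near ((one_le_pow₀ one_le_two).trans hx.le) one_lt_two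
  have him : i ≤ m := Nat.lt_succ_iff.1 ((pow_lt_pow_iff_right₀ one_lt_two).1 (hx.trans hm'))
  refine ⟨(1 / 2 : ℝ) ^ (m + 1) • x, ?_, norm_half_pow_smul_le_one hm'.le, ?_⟩
  · rw [norm_half_pow_smul, div_le_div_iff₀ two_pos (by positivity), one_mul, pow_succ]
    gcongr
  · obtain ⟨j, rfl⟩ := Nat.exists_eq_add_of_le him
    convert hhalf x hxA (j + 1) using 1
    rw [smul_smul, add_assoc, pow_add, ← mul_assoc, ← mul_pow, mul_one_div_cancel two_ne_zero,
      one_pow, one_mul]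

lemma exists_ne_zero_forall_two_pow_smul_mem [ProperSpace E] (hcl : IsClosed A)
    (hhalf : ∀ x ∈ A, ∀ m : ℕ, (1 / 2 : ℝ) ^ m • x ∈ A) (hA : ¬ Bornology.IsBounded A) :
    ∃ x : E, x ≠ 0 ∧ ∀ i : ℕ, (2 : ℝ) ^ i • x ∈ A := by
  let T : ℕ → Set E := fun i => {x | 1 / 2 ≤ ‖x‖ ∧ ‖x‖ ≤ 1 ∧ (2 : ℝ) ^ i • x ∈ A}
  have hTcl : ∀ i, IsClosed (T i) := fun i =>
    (isClosed_le continuous_const continuous_norm).inter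
      ((isClosed_le continuous_norm continuous_const).inter
        (hcl.preimage (continuous_const_smul _)))
  have hTmono : ∀ i, T (i + 1) ⊆ T i := fun i x ⟨h₁, h₂, h₃⟩ => ⟨h₁, h₂, by
    simpa [smul_smul, pow_succ'] using hhalf _ h₃ 1⟩
  have hT0 : IsCompact (T 0) := Metric.isCompact_of_isClosed_isBounded (hTcl 0) <|
    isBounded_iff_forall_norm_le.2 ⟨1, fun x hx => hx.2.1⟩
  obtain ⟨x, hx⟩ := IsCompact.nonempty_iInter_of_sequence_nonempty_isCompact_isClosed T hTmono
    (exists_two_pow_smul_mem_of_not_isBounded hhalf hA) hT0 hTcl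
  rw [mem_iInter] at hx
  exact ⟨x, norm_pos_iff.1 (one_half_pos.trans_le (hx 0).1), fun i => (hx i).2.2⟩

end Halving

lemma disjoint_frontier_connectedComponentIn {X : Type*} [TopologicalSpace X]
    [LocallyConnectedSpace X] {U : Set X} (hU : IsOpen U) (x : X) :
    Disjoint (frontier (connectedComponentIn U x)) U := by
  refine disjoint_left.2 fun y hy hyU => ?_
  obtain ⟨z, hzy, hzx⟩ := mem_closure_iff.1 (frontier_subset_closure hy) _
    hU.connectedComponentIn (mem_connectedComponentIn hyU)
  refine hy.2 ?_
  rw [hU.connectedComponentIn.interior_eq, connectedComponentIn_eq hzx,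
    ← connectedComponentIn_eq hzy]
  exact mem_connectedComponentIn hyU

namespace HyperbolicChart

section StableLeaf

variable {Es Eu : Type*} [NormedAddCommGroup Es] [NormedSpace ℝ Es] [NormedAddCommGroup Eu]
  [NormedSpace ℝ Eu] {f : M ≃ₜ M} {p : M} {α ε : ℝ} {N : Set M} (C : HyperbolicChart f p Es Eu)

variable {C} in
lemma stableParam_half_pow_smul_mem_WsLoc {x : Es} (hx : C.stableParam x ∈ WsLoc f ε p) (m : ℕ) :
    C.stableParam ((1 / 2 : ℝ) ^ m • x) ∈ WsLoc f ε p := by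
  simpa only [iterZ_stableParam, C.iterZ_period_mul] using
    iterZ_mem_WsLoc hx (k := C.period * m) (by positivity)

variable {C} in
lemma eq_zero_of_forall_stableParam_two_pow_smul_mem_WsLoc (hexp : IsExpansive f α) (hεα : ε ≤ α)
    {x : Es} (hx : ∀ i : ℕ, C.stableParam ((2 : ℝ) ^ i • x) ∈ WsLoc f ε p) : x = 0 := by
  refine stableParam_injective (C := C) (stableParam_zero.trans ?_).symm
  by_contra hne
  obtain ⟨k, hk⟩ := hexp _ _ hne
  refine hk.not_ge (le_trans ?_ hεα)
  have hnonneg : 0 ≤ k + C.period * k.natAbs := by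
    have hperiod : (1 : ℤ) ≤ C.period := by exact_mod_cast C.one_le_period
    nlinarith [neg_abs_le k, Int.natCast_natAbs k, abs_nonneg k]
  have h := hx k.natAbs _ hnonneg
  rwa [iterZ_add, iterZ_add, C.iterZ_period_mul, iterZ_stableParam, smul_smul, ← mul_pow,
    one_div_mul_cancel two_ne_zero, one_pow, one_smul] at h

lemma isClosed_stableParam_preimage_WsLoc (ε : ℝ) :
    IsClosed (C.stableParam ⁻¹' WsLoc f ε p) :=
  (isClosed_WsLoc f ε p).preimage continuous_stableParam

lemma isBounded_stableParam_preimage_WsLoc [ProperSpace Es] (hexp : IsExpansive f α)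
    (hεα : ε ≤ α) : Bornology.IsBounded (C.stableParam ⁻¹' WsLoc f ε p) := by
  by_contra hunb
  obtain ⟨x, hx, hmem⟩ := exists_ne_zero_forall_two_pow_smul_mem
    (C.isClosed_stableParam_preimage_WsLoc ε)
    (fun _ hx => stableParam_half_pow_smul_mem_WsLoc hx) hunb
  exact hx (eq_zero_of_forall_stableParam_two_pow_smul_mem_WsLoc hexp hεα hmem)

lemma stableParam_preimage_WsLoc_mem_nhds (hε : 0 < ε) {x : Es}
    (hx : ∀ k : ℤ, 0 ≤ k → dist (iterZ f k p) (iterZ f k (C.stableParam x)) < ε) :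
    C.stableParam ⁻¹' WsLoc f ε p ∈ 𝓝 x := by
  obtain ⟨ρ, hρ, hρ1, hball⟩ := C.exists_forall_chart_mem_WsLoc hε
  obtain ⟨m, hm⟩ := pow_unbounded_of_one_lt (‖x‖ / ρ) (one_lt_two (α := ℝ))
  rw [div_lt_iff₀ hρ] at hm
  have hfirst : ∀ᶠ y in 𝓝 x, ∀ i < C.period * m,
      dist (iterZ f i p) (iterZ f i (C.stableParam y)) < ε :=
    (eventually_all_finite (finite_lt_nat _)).2 fun i _ =>
      (continuous_const.dist
        ((continuous_iterZ f i).comp continuous_stableParam)).continuousAt.eventually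
        (gt_mem_nhds (hx i (by positivity)))
  filter_upwards [continuous_norm.continuousAt.eventually (gt_mem_nhds hm), hfirst]
    with y hy hyfirst k hk
  lift k to ℕ using hk
  rcases lt_or_ge k (C.period * m) with h | h
  · exact (hyfirst k h).le
  · obtain ⟨j, rfl⟩ := Nat.exists_eq_add_of_le' h
    have hle : ‖(1 / 2 : ℝ) ^ m • y‖ ≤ ρ := by
      rw [norm_half_pow_smul]
      exact div_le_of_le_mul₀ (by positivity) hρ.le (by linarith)
    rw [Nat.cast_add, Nat.cast_mul, iterZ_add, iterZ_add, C.iterZ_period_mul, iterZ_stableParam,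
      stableParam_of_norm_le_one (hle.trans hρ1)]
    exact hball _ hle j (by positivity)

/-- The connected component through `p` of the part of the stable set of `p` inside `N`, read in
the parametrization `stableParam`. -/
def stableLeaf (N : Set M) : Set Es :=
  connectedComponentIn (C.stableParam ⁻¹' N) 0

lemma isOpen_stableLeaf (hN : IsOpen N) : IsOpen (C.stableLeaf N) :=
  (hN.preimage continuous_stableParam).connectedComponentIn

lemma zero_mem_stableLeaf (hp : p ∈ N) : 0 ∈ C.stableLeaf N :=
  mem_connectedComponentIn (by rwa [mem_preimage, stableParam_zero])

variable {C} in
lemma stableParam_mem_closure_of_mem_closure_stableLeaf {x : Es}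
    (hx : x ∈ closure (C.stableLeaf N)) : C.stableParam x ∈ closure N :=
  map_mem_closure continuous_stableParam hx (connectedComponentIn_subset _ _)

variable {C} in
lemma stableParam_notMem_of_mem_frontier_stableLeaf (hN : IsOpen N) {x : Es}
    (hx : x ∈ frontier (C.stableLeaf N)) : C.stableParam x ∉ N :=
  disjoint_left.1
    (disjoint_frontier_connectedComponentIn (hN.preimage continuous_stableParam) 0) hx

/- Inside `N` the set `stableParam ⁻¹' WsLoc f ε p` is relatively closed and, by the strict
inequalities of `hgap`, relatively open. -/
lemma closure_stableLeaf_subset (hε : 0 < ε) (hp : p ∈ N)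
    (hgap : ∀ y ∈ N, y ∈ WsLoc f ε p → ∀ k : ℤ, 0 ≤ k → dist (iterZ f k p) (iterZ f k y) < ε) :
    closure (C.stableLeaf N) ⊆ C.stableParam ⁻¹' WsLoc f ε p := by
  set A := C.stableParam ⁻¹' WsLoc f ε p
  have hA : IsClosed A := C.isClosed_stableParam_preimage_WsLoc ε
  have hint : ∀ x ∈ A, C.stableParam x ∈ N → x ∈ interior A := fun x hxA hxN =>
    mem_interior_iff_mem_nhds.2 (C.stableParam_preimage_WsLoc_mem_nhds hε (hgap _ hxN hxA))
  have h0A : 0 ∈ A := by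
    rw [mem_preimage, stableParam_zero]
    exact mem_WsLoc_self hε.le p
  have hsub : C.stableLeaf N ⊆ interior A :=
    isPreconnected_connectedComponentIn.subset_of_closure_inter_subset isOpen_interior
      ⟨0, C.zero_mem_stableLeaf hp, hint 0 h0A (by rwa [stableParam_zero])⟩
      fun x ⟨hx, hxleaf⟩ => hint x (closure_minimal interior_subset hA hx)
        (connectedComponentIn_subset (C.stableParam ⁻¹' N) 0 hxleaf)
  exact closure_minimal (hsub.trans interior_subset) hA

end StableLeaf

end HyperbolicChart
namespace HyperbolicChart

section Crossing

variable {Es Eu Es' Eu' : Type*} [NormedAddCommGroup Es] [NormedSpace ℝ Es]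
  [NormedAddCommGroup Eu] [NormedSpace ℝ Eu] [NormedAddCommGroup Es'] [NormedSpace ℝ Es']
  [NormedAddCommGroup Eu'] [NormedSpace ℝ Eu'] {f : M ≃ₜ M} {p q : M} {α ε ρ : ℝ}
  (C : HyperbolicChart f p Es Eu)

/-- Conditions on a point `q` close to `p` which force the `ε`-local stable set of `q` to leave
the ball of radius `ρ` of the chart through the part of the boundary where the stable coordinate
has norm `ρ`. -/
structure StableControl (ε ρ : ℝ) (q : M) : Prop where
  mem : q ∈ C.chart '' ball 0 ρ
  norm_snd_lt : ∀ z ∈ closedBall 0 ρ, C.chart z ∈ WsLoc f ε q → ‖z.2‖ < ρ / 2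
  dist_lt : ∀ y ∈ C.chart '' ball 0 ρ, y ∈ WsLoc f ε q →
    ∀ k : ℤ, 0 ≤ k → dist (iterZ f k q) (iterZ f k y) < ε

lemma isCompact_image_closedBall [ProperSpace Es] [ProperSpace Eu] (hρ1 : ρ ≤ 1) :
    IsCompact (C.chart '' closedBall 0 ρ) :=
  (isCompact_closedBall _ _).image_of_continuousOn
    (C.chart.continuousOn.mono (C.closedBall_subset_source_of_le hρ1))

lemma isOpen_image_ball (hρ1 : ρ ≤ 1) : IsOpen (C.chart '' ball 0 ρ) :=
  C.chart.isOpen_image_of_subset_source isOpen_ball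
    (ball_subset_closedBall.trans (C.closedBall_subset_source_of_le hρ1))

lemma symm_image_closedBall (ρ : ℝ) :
    C.symm.chart '' closedBall 0 ρ = C.chart '' closedBall 0 ρ := by
  rw [← C.symm_image_swap_preimage]
  congr 1
  ext z
  simp [Prod.norm_def, max_comm]

lemma stableParam_mem_image_closedBall [ProperSpace Es] [ProperSpace Eu] (hρ1 : ρ ≤ 1)
    {D : HyperbolicChart f q Es' Eu'} {x : Es'}
    (hx : x ∈ closure (D.stableLeaf (C.chart '' ball 0 ρ))) :
    D.stableParam x ∈ C.chart '' closedBall 0 ρ :=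
  closure_minimal (image_mono ball_subset_closedBall)
    (C.isCompact_image_closedBall hρ1).isClosed
    (stableParam_mem_closure_of_mem_closure_stableLeaf hx)

lemma eventually_norm_snd_lt [ProperSpace Es] [ProperSpace Eu] (hC : C.IsAdapted ε)
    (hρ : 0 < ρ) (hρ1 : ρ ≤ 1) :
    ∀ᶠ q in 𝓝 p, ∀ z ∈ closedBall 0 ρ, C.chart z ∈ WsLoc f ε q → ‖z.2‖ < ρ / 2 := by
  have hsub := C.closedBall_subset_source_of_le hρ1
  set K := closedBall (0 : Es × Eu) ρ ∩ {z | ρ / 2 ≤ ‖z.2‖}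
  have hK : IsCompact (C.chart '' K) :=
    ((isCompact_closedBall _ _).inter_right
      (isClosed_le continuous_const continuous_snd.norm)).image_of_continuousOn
      (C.chart.continuousOn.mono (inter_subset_left.trans hsub))
  have hp : p ∉ {x | ∃ y ∈ C.chart '' K, y ∈ WsLoc f ε x} := by
    rintro ⟨_, ⟨z, ⟨hz, hz2⟩, rfl⟩, hmem⟩
    obtain ⟨a, ha, hza⟩ := hC.stable _ hmem
    rw [← C.chart.injOn (C.mem_source ha (by simp)) (hsub hz) hza, mem_ofPred_eq, norm_zero] at hz2
    linarith
  filter_upwards [(isClosed_setOf_exists_mem_WsLoc f hK ε).isOpen_compl.mem_nhds hp]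
    with q hq z hz hmem
  exact lt_of_not_ge fun hz2 => hq ⟨C.chart z, ⟨z, ⟨hz, hz2⟩, rfl⟩, hmem⟩

lemma exists_forall_eventually_stableControl [CompactSpace M] [ProperSpace Es] [ProperSpace Eu]
    (hexp : IsExpansive f α) (hε : 0 < ε) (hεα : ε ≤ α) (hC : C.IsAdapted ε) :
    ∃ ρ₀ > 0, ∀ ρ, 0 < ρ → ρ ≤ ρ₀ → ρ ≤ 1 ∧ ∀ᶠ q in 𝓝 p, C.StableControl ε ρ q := by
  obtain ⟨δ, hδ, hgap⟩ := hexp.exists_dist_lt_of_mem_WsLoc hε hεα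
  obtain ⟨ρ₁, hρ₁, hball⟩ := nhds_basis_closedBall.mem_iff.1
    (C.tendsto_chart (ball_mem_nhds p (half_pos hδ)))
  refine ⟨min ρ₁ 1, lt_min hρ₁ one_pos, fun ρ hρ hρle => ?_⟩
  have hρ1 := hρle.trans (min_le_right _ _)
  have hnear : C.chart '' ball 0 ρ ⊆ ball p (δ / 2) := image_subset_iff.2 <|
    (ball_subset_closedBall.trans
      (closedBall_subset_closedBall (hρle.trans (min_le_left _ _)))).trans hball
  refine ⟨hρ1, ?_⟩
  filter_upwards [C.image_mem_nhds (ball_mem_nhds 0 hρ), C.eventually_norm_snd_lt hC hρ hρ1]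
    with q hq hsnd
  refine ⟨hq, hsnd, fun y hy => hgap q y ?_⟩
  calc dist q y ≤ dist q p + dist y p := dist_triangle_right _ _ _
    _ < δ := by linarith [mem_ball.1 (hnear hq), mem_ball.1 (hnear hy)]

namespace StableControl

variable {C} {D : HyperbolicChart f q Es' Eu'} {x : Es'}

lemma stableParam_mem_WsLoc (h : C.StableControl ε ρ q) (hε : 0 < ε)
    (hx : x ∈ closure (D.stableLeaf (C.chart '' ball 0 ρ))) : D.stableParam x ∈ WsLoc f ε q :=
  D.closure_stableLeaf_subset hε h.mem h.dist_lt hx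

lemma norm_snd_symm_stableParam_lt [ProperSpace Es] [ProperSpace Eu]
    (h : C.StableControl ε ρ q) (hε : 0 < ε) (hρ1 : ρ ≤ 1)
    (hx : x ∈ closure (D.stableLeaf (C.chart '' ball 0 ρ))) :
    ‖(C.chart.symm (D.stableParam x)).2‖ < ρ / 2 := by
  obtain ⟨z, hz, hzx⟩ := C.stableParam_mem_image_closedBall hρ1 hx
  have hmem := h.stableParam_mem_WsLoc hε hx
  rw [← hzx] at hmem ⊢
  rw [C.chart.left_inv (C.closedBall_subset_source_of_le hρ1 hz)]
  exact h.norm_snd_lt z hz hmem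

lemma norm_fst_symm_stableParam_eq [ProperSpace Es] [ProperSpace Eu]
    (h : C.StableControl ε ρ q) (hε : 0 < ε) (hρ : 0 < ρ) (hρ1 : ρ ≤ 1)
    (hx : x ∈ frontier (D.stableLeaf (C.chart '' ball 0 ρ))) :
    ‖(C.chart.symm (D.stableParam x)).1‖ = ρ := by
  have hsub := C.closedBall_subset_source_of_le hρ1
  obtain ⟨z, hz, hzx⟩ := C.stableParam_mem_image_closedBall hρ1 hx.1
  have hsnd := h.norm_snd_symm_stableParam_lt hε hρ1 hx.1
  have hout := stableParam_notMem_of_mem_frontier_stableLeaf (C.isOpen_image_ball hρ1) hx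
  rw [← hzx] at hsnd hout ⊢
  rw [C.chart.left_inv (hsub hz)] at hsnd ⊢
  have hnorm : ‖z‖ = ρ := (mem_closedBall_zero_iff.1 hz).antisymm <|
    not_lt.1 fun hlt => hout (mem_image_of_mem _ (mem_ball_zero_iff.2 hlt))
  rw [Prod.norm_def] at hnorm
  exact (max_choice ‖z.1‖ ‖z.2‖).elim (fun hmax => hmax.symm.trans hnorm)
    fun hmax => absurd (hmax.symm.trans hnorm) (by linarith)

lemma isBounded_stableLeaf [ProperSpace Es'] (h : C.StableControl ε ρ q) (hexp : IsExpansive f α)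
    (hε : 0 < ε) (hεα : ε ≤ α) : Bornology.IsBounded (D.stableLeaf (C.chart '' ball 0 ρ)) :=
  (D.isBounded_stableParam_preimage_WsLoc hexp hεα).subset
    fun _ hx => h.stableParam_mem_WsLoc hε (subset_closure hx)

lemma eq_zero_of_stableParam_eq (hs : C.StableControl ε ρ q) (hu : C.symm.StableControl ε ρ q)
    (hexp : IsExpansive f α) (hε : 0 < ε) (hεα : ε ≤ α)
    (hx : x ∈ closure (D.stableLeaf (C.chart '' ball 0 ρ))) {y : Eu'}
    (hy : y ∈ closure (D.symm.stableLeaf (C.symm.chart '' ball 0 ρ)))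
    (hxy : D.stableParam x = D.symm.stableParam y) : x = 0 ∧ y = 0 := by
  have hmemu := hu.stableParam_mem_WsLoc hε hy
  rw [WsLoc_symm, ← hxy] at hmemu
  have hq := hexp.eq_of_mem_WsLoc_of_mem_WuLoc
    (WsLoc_mono hεα (hs.stableParam_mem_WsLoc hε hx)) (WuLoc_mono hεα hmemu)
  exact ⟨stableParam_injective (hq.symm.trans stableParam_zero.symm),
    stableParam_injective ((hxy.symm.trans hq.symm).trans stableParam_zero.symm)⟩

lemma exists_fst_symm_stableParam_eq_zero [FiniteDimensional ℝ Es] [FiniteDimensional ℝ Eu]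
    [FiniteDimensional ℝ Es'] [FiniteDimensional ℝ Eu'] (hs : C.StableControl ε ρ q)
    (hu : C.symm.StableControl ε ρ q) (D : HyperbolicChart f q Es' Eu') (hexp : IsExpansive f α)
    (hε : 0 < ε) (hεα : ε ≤ α) (hρ : 0 < ρ) (hρ1 : ρ ≤ 1) :
    ∃ x ∈ closure (D.stableLeaf (C.chart '' ball 0 ρ)),
      (C.chart.symm (D.stableParam x)).1 = 0 := by
  have htgt : C.chart '' closedBall 0 ρ ⊆ C.chart.target :=
    image_subset_iff.2 fun z hz => C.chart.map_source (C.closedBall_subset_source_of_le hρ1 hz)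
  have hs_tgt : MapsTo D.stableParam (closure (D.stableLeaf (C.chart '' ball 0 ρ)))
      C.chart.target := fun x hx => htgt (C.stableParam_mem_image_closedBall hρ1 hx)
  have hu_tgt : MapsTo D.symm.stableParam (closure (D.symm.stableLeaf (C.symm.chart '' ball 0 ρ)))
      C.chart.target := fun y hy =>
    htgt (C.symm_image_closedBall ρ ▸ C.symm.stableParam_mem_image_closedBall hρ1 hy)
  have hq_tgt : D.chart 0 ∈ C.chart.target :=
    D.chart_zero.symm ▸ htgt (image_mono ball_subset_closedBall hs.mem)
  refine exists_fst_eq_zero_of_crossing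
    (B := fun y => C.chart.symm (D.symm.stableParam y))
    (D.isOpen_stableLeaf (C.isOpen_image_ball hρ1))
    (D.symm.isOpen_stableLeaf (C.symm.isOpen_image_ball hρ1))
    (hs.isBounded_stableLeaf hexp hε hεα) (hu.isBounded_stableLeaf hexp.symm hε hεα)
    (D.zero_mem_stableLeaf hs.mem) (D.symm.zero_mem_stableLeaf hu.mem)
    (C.chart.continuousOn_symm.comp continuous_stableParam.continuousOn hs_tgt)
    (C.chart.continuousOn_symm.comp continuous_stableParam.continuousOn hu_tgt)
    (D.chart.trans C.chart.symm) ⟨D.zero_mem_source, hq_tgt⟩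
    (D.eventually_stableParam_eq.mono fun x hx => congrArg C.chart.symm hx)
    (D.symm.eventually_stableParam_eq.mono fun y hy => congrArg C.chart.symm hy)
    (fun x hx y hy hxy => hs.eq_zero_of_stableParam_eq hu hexp hε hεα hx hy
      (C.chart.symm.injOn (hs_tgt hx) (hu_tgt hy) hxy))
    (fun x hx y hy => ?_) (fun x hx y hy => ?_)
  · rw [hs.norm_fst_symm_stableParam_eq hε hρ hρ1 hx]
    exact (hu.norm_snd_symm_stableParam_lt hε hρ1 hy).trans (half_lt_self hρ)
  · exact ((hs.norm_snd_symm_stableParam_lt hε hρ1 hx).trans (half_lt_self hρ)).trans_eq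
      (hu.norm_fst_symm_stableParam_eq hε hρ hρ1 hy).symm

lemma exists_chart_mem_WsLoc [FiniteDimensional ℝ Es] [FiniteDimensional ℝ Eu]
    [FiniteDimensional ℝ Es'] [FiniteDimensional ℝ Eu'] (hs : C.StableControl ε ρ q)
    (hu : C.symm.StableControl ε ρ q) (D : HyperbolicChart f q Es' Eu') (hexp : IsExpansive f α)
    (hε : 0 < ε) (hεα : ε ≤ α) (hρ : 0 < ρ) (hρ1 : ρ ≤ 1) :
    ∃ b : Eu, ‖b‖ ≤ ρ ∧ C.chart (0, b) ∈ WsLoc f ε q := by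
  obtain ⟨x, hx, hx0⟩ := hs.exists_fst_symm_stableParam_eq_zero hu D hexp hε hεα hρ hρ1
  obtain ⟨z, hz, hzx⟩ := C.stableParam_mem_image_closedBall hρ1 hx
  have hmem := hs.stableParam_mem_WsLoc hε hx
  rw [← hzx] at hx0 hmem
  rw [C.chart.left_inv (C.closedBall_subset_source_of_le hρ1 hz)] at hx0
  exact ⟨z.2, (norm_snd_le z).trans (mem_closedBall_zero_iff.1 hz), by rwa [← hx0]⟩

end StableControl

lemma exists_forall_eventually_hyperbolicPoints [CompactSpace M] [FiniteDimensional ℝ Es]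
    [FiniteDimensional ℝ Eu] (hexp : IsExpansive f α) (hε : 0 < ε) (hεα : ε ≤ α)
    (hC : C.IsAdapted ε) :
    ∃ ρ₀ > 0, ∀ ρ, 0 < ρ → ρ ≤ ρ₀ → ∀ᶠ q in 𝓝 p, q ∈ hyperbolicPoints f →
      ∃ b : Eu, ‖b‖ ≤ ρ ∧ C.chart (0, b) ∈ WsLoc f ε q := by
  obtain ⟨ρs, hρs, hs⟩ := C.exists_forall_eventually_stableControl hexp hε hεα hC
  obtain ⟨ρu, hρu, hu⟩ := C.symm.exists_forall_eventually_stableControl hexp.symm hε hεα hC.symm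
  refine ⟨min ρs ρu, lt_min hρs hρu, fun ρ hρ hρle => ?_⟩
  obtain ⟨hρ1, hs⟩ := hs ρ hρ (hρle.trans (min_le_left _ _))
  filter_upwards [hs, (hu ρ hρ (hρle.trans (min_le_right _ _))).2]
  rintro q hqs hqu ⟨r, s, ⟨D⟩⟩
  exact hqs.exists_chart_mem_WsLoc hqu D hexp hε hεα hρ hρ1

end Crossing

end HyperbolicChart

section StableProjections

/-- A continuous map on `W` whose fibres are the traces on `W` of the `ε`-local stable sets. -/
structure IsStableProjection {E : Type*} [TopologicalSpace E] (f : M ≃ₜ M) (ε : ℝ) (W : Set M)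
    (π : M → E) : Prop where
  continuousOn : ContinuousOn π W
  eq_iff : ∀ x ∈ W, ∀ y ∈ W, (π x = π y ↔ y ∈ WsLoc f ε x)

variable {f : M ≃ₜ M} {α ε : ℝ}

lemma IsStableProjection.mono {E : Type*} [TopologicalSpace E] {W W' : Set M} {π : M → E}
    (h : IsStableProjection f ε W π) (hW : W' ⊆ W) : IsStableProjection f ε W' π :=
  ⟨h.continuousOn.mono hW, fun x hx y hy => h.eq_iff x (hW hx) y (hW hy)⟩

/- The projection sends `x` to the parameter of the point where its local stable set meets the
transversal `σ`; compactness of `K` makes it continuous, as its graph is closed. -/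
lemma exists_isStableProjection_of_transversal {E : Type*} [TopologicalSpace E] [Nonempty E]
    (hε : 0 ≤ ε) {W : Set M} {K : Set E} {σ : E → M} (hK : IsCompact K) (hσ : ContinuousOn σ K)
    (huniq : ∀ b ∈ K, ∀ b' ∈ K, σ b' ∈ WsLoc f (4 * ε) (σ b) → b = b')
    (hex : ∀ x ∈ W, ∃ b ∈ K, σ b ∈ WsLoc f ε x) :
    ∃ π : M → E, IsStableProjection f (2 * ε) W π := by
  choose! π hπK hπ using hex
  refine ⟨π, fun x hx => ?_, fun x hx y hy => ⟨fun hxy => ?_, fun hxy => ?_⟩⟩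
  · refine tendsto_nhds.2 fun V hV hxV => ?_
    have hclosed : IsClosed {y | ∃ z ∈ σ '' (K \ V), z ∈ WsLoc f ε y} :=
      isClosed_setOf_exists_mem_WsLoc f
        ((hK.diff hV).image_of_continuousOn (hσ.mono sdiff_subset)) ε
    have hx_notMem : ¬∃ z ∈ σ '' (K \ V), z ∈ WsLoc f ε x := by
      rintro ⟨_, ⟨b, hb, rfl⟩, hbx⟩
      have hxb := mem_WsLoc_trans (mem_WsLoc_comm.1 (hπ x hx)) hbx
      exact hb.2 (huniq _ (hπK x hx) _ hb.1 (WsLoc_mono (by linarith) hxb) ▸ hxV)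
    filter_upwards [mem_nhdsWithin_of_mem_nhds (hclosed.isOpen_compl.mem_nhds hx_notMem),
      self_mem_nhdsWithin] with y hy hyW
    by_contra hyV
    exact hy ⟨_, mem_image_of_mem σ ⟨hπK y hyW, hyV⟩, hπ y hyW⟩
  · have hyx := mem_WsLoc_trans (hπ x hx) (mem_WsLoc_comm.1 (hxy ▸ hπ y hy))
    exact WsLoc_mono (by linarith) hyx
  · have hxy' := mem_WsLoc_trans (mem_WsLoc_comm.1 (hπ x hx)) (mem_WsLoc_trans hxy (hπ y hy))
    exact huniq _ (hπK x hx) _ (hπK y hy) (WsLoc_mono (by linarith) hxy')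

namespace HyperbolicChart

variable {Es Eu : Type*} [NormedAddCommGroup Es] [NormedSpace ℝ Es] [NormedAddCommGroup Eu]
  [NormedSpace ℝ Eu] {p : M} (C : HyperbolicChart f p Es Eu)

lemma continuousOn_chart_unstable_axis {ρ : ℝ} (hρ : ρ ≤ 1) :
    ContinuousOn (fun b : Eu => C.chart (0, b)) (closedBall 0 ρ) :=
  C.chart.continuousOn.comp (by fun_prop) fun b hb =>
    C.mem_source (by simp) ((mem_closedBall_zero_iff.1 hb).trans hρ)

lemma eq_of_chart_mem_WsLoc (hexp : IsExpansive f α) (hε : 0 ≤ ε) (hεα : 4 * ε ≤ α) {b b' : Eu}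
    (hb : ‖b‖ ≤ 1) (hb' : ‖b'‖ ≤ 1) (hbp : C.chart (0, b) ∈ WuLoc f ε p)
    (hbp' : C.chart (0, b') ∈ WuLoc f ε p)
    (h : C.chart (0, b') ∈ WsLoc f (4 * ε) (C.chart (0, b))) : b = b' := by
  rw [← WsLoc_symm] at hbp hbp'
  have hu := mem_WsLoc_trans (mem_WsLoc_comm.1 hbp) hbp'
  rw [WsLoc_symm] at hu
  have heq := hexp.eq_of_mem_WsLoc_of_mem_WuLoc (WsLoc_mono hεα h) (WuLoc_mono (by linarith) hu)
  exact (Prod.ext_iff.1 (C.chart.injOn (C.mem_source (by simp) hb)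
    (C.mem_source (by simp) hb') heq)).2

variable [CompactSpace M] [FiniteDimensional ℝ Es] [FiniteDimensional ℝ Eu]

lemma exists_forall_eventually_chart_mem_WsLoc (hexp : IsExpansive f α) (hε : 0 < ε)
    (hεα : ε ≤ α) (hC : C.IsAdapted ε) (hdense : Dense (hyperbolicPoints f)) :
    ∃ ρ₀ > 0, ∀ ρ, 0 < ρ → ρ ≤ ρ₀ → ρ ≤ 1 →
      ∀ᶠ x in 𝓝 p, ∃ b ∈ closedBall (0 : Eu) ρ, C.chart (0, b) ∈ WsLoc f ε x := by
  obtain ⟨ρ₀, hρ₀, h⟩ := C.exists_forall_eventually_hyperbolicPoints hexp hε hεα hC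
  refine ⟨ρ₀, hρ₀, fun ρ hρ hρle hρ1 => ?_⟩
  obtain ⟨W, hW, hWo, hpW⟩ := _root_.eventually_nhds_iff.1 (h ρ hρ hρle)
  have hclosed : IsClosed {x | ∃ y ∈ (fun b : Eu => C.chart (0, b)) '' closedBall 0 ρ,
      y ∈ WsLoc f ε x} :=
    isClosed_setOf_exists_mem_WsLoc f ((isCompact_closedBall _ _).image_of_continuousOn
      (C.continuousOn_chart_unstable_axis hρ1)) ε
  simp only [exists_mem_image] at hclosed
  refine _root_.eventually_nhds_iff.2 ⟨W, fun x hx => ?_, hWo, hpW⟩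
  refine closure_minimal ?_ hclosed (hdense.open_subset_closure_inter hWo hx)
  rintro q ⟨hqW, hq⟩
  obtain ⟨b, hb, hbq⟩ := hW q hqW hq
  exact ⟨b, mem_closedBall_zero_iff.2 hb, hbq⟩

lemma exists_isStableProjection (hexp : IsExpansive f α) (hε : 0 < ε) (hεα : 4 * ε ≤ α)
    (hC : C.IsAdapted ε) (hdense : Dense (hyperbolicPoints f)) :
    ∃ W, IsOpen W ∧ p ∈ W ∧ ∃ π : M → Eu, IsStableProjection f (2 * ε) W π := by
  obtain ⟨ρ₀, hρ₀, hmeet⟩ := C.exists_forall_eventually_chart_mem_WsLoc hexp hε (by linarith)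
    hC hdense
  obtain ⟨ρ₁, hρ₁, hρ₁1, haxis⟩ := C.symm.exists_forall_chart_mem_WsLoc hε
  rw [WsLoc_symm] at haxis
  set ρ := min ρ₀ ρ₁
  have hρ1 : ρ ≤ 1 := (min_le_right _ _).trans hρ₁1
  obtain ⟨W, hW, hWo, hpW⟩ :=
    _root_.eventually_nhds_iff.1 (hmeet ρ (lt_min hρ₀ hρ₁) (min_le_left _ _) hρ1)
  refine ⟨W, hWo, hpW, exists_isStableProjection_of_transversal hε.le
    (isCompact_closedBall 0 ρ) (C.continuousOn_chart_unstable_axis hρ1) ?_ hW⟩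
  intro b hb b' hb'
  rw [mem_closedBall_zero_iff] at hb hb'
  exact C.eq_of_chart_mem_WsLoc hexp hε.le hεα (hb.trans hρ1) (hb'.trans hρ1)
    (haxis b (hb.trans (min_le_right _ _))) (haxis b' (hb'.trans (min_le_right _ _)))

end HyperbolicChart

end StableProjections

section LocalProductStructure

variable {f : M ≃ₜ M} {α ε : ℝ} {p : M}

lemma IsStableProjection.image_eq {E Z : Type*} [TopologicalSpace E] {W : Set M} {π : M → E}
    (hπ : IsStableProjection f ε W π) {h : Z → M} (hW : range h ⊆ W) {S : Set Z} {z₀ : Z}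
    (hS : ∀ z, z ∈ S ↔ π (h z₀) = π (h z)) : h '' S = WsLoc f ε (h z₀) ∩ range h := by
  rw [← image_preimage_eq_inter_range]
  congr 1
  ext z
  rw [hS, mem_preimage]
  exact hπ.eq_iff _ (hW (mem_range_self z₀)) _ (hW (mem_range_self z))

lemma IsStableProjection.injOn_prodMk {E E' : Type*} [TopologicalSpace E] [TopologicalSpace E']
    {W : Set M} {π : M → E} {π' : M → E'} (hπ : IsStableProjection f ε W π)
    (hπ' : IsStableProjection f.symm ε W π') (hexp : IsExpansive f α) (hεα : ε ≤ α) :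
    InjOn (fun x => (π x, π' x)) W := fun x hx y hy hxy => by
  obtain ⟨h, h'⟩ := Prod.ext_iff.1 hxy
  have hu := (hπ'.eq_iff x hx y hy).1 h'
  rw [WsLoc_symm] at hu
  exact hexp.eq_of_mem_WsLoc_of_mem_WuLoc (WsLoc_mono hεα ((hπ.eq_iff x hx y hy).1 h))
    (WuLoc_mono hεα hu)

lemma admitsLPS_of_isStableProjection {E : Type*} [NormedAddCommGroup E] [NormedSpace ℝ E]
    [FiniteDimensional ℝ E] {n k : ℕ} {W : Set M} {πu : M → Fin k → ℝ} {πs : M → Fin (n - k) → ℝ}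
    (hdim : finrank ℝ E = k + (n - k)) (e : OpenPartialHomeomorph E M) (hpe : p ∈ e.target)
    (hexp : IsExpansive f α) (hε : 0 < ε) (hεα : ε ≤ α) (hW : IsOpen W) (hpW : p ∈ W)
    (hu : IsStableProjection f ε W πu) (hs : IsStableProjection f.symm ε W πs) :
    AdmitsLPS f n p := by
  obtain ⟨G, hGV, hG⟩ := exists_openPartialHomeomorph_of_injOn (by simpa using hdim) e
    (hW.inter e.open_target) inter_subset_right
    ((hu.continuousOn.prodMk hs.continuousOn).mono inter_subset_left)
    ((hu.injOn_prodMk hs hexp hεα).mono inter_subset_left)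
  obtain ⟨h, a, b, hemb, hph, hrange, ha, hb, hcoord⟩ :=
    exists_isEmbedding_prod G (p := p) (hGV ▸ ⟨hpW, hpe⟩)
  have hhW : range h ⊆ W := hrange.trans (hGV ▸ inter_subset_left)
  simp only [hG, Prod.mk.injEq] at hcoord
  refine ⟨k, h, ε, hε, hemb, hph, fun x y => ⟨hu.image_eq hhW fun z => ?_, ?_⟩⟩
  · simp [hcoord, ha.eq_iff, eq_comm]
  · rw [← WsLoc_symm]
    exact hs.image_eq hhW fun z => by simp [hcoord, hb.eq_iff, eq_comm]

lemma HyperbolicChart.admitsLPS [CompactSpace M] {n r k : ℕ}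
    (C : HyperbolicChart f p (Fin r → ℝ) (Fin k → ℝ)) (hr : r = n - k) (hα : 0 < α)
    (hexp : IsExpansive f α) (hdense : Dense (hyperbolicPoints f)) : AdmitsLPS f n p := by
  subst hr
  obtain ⟨ε, hε, hεα, hC⟩ := C.exists_isAdapted (show 0 < α / 4 by positivity)
  obtain ⟨Nu, hNu, hpNu, πu, hπu⟩ :=
    C.exists_isStableProjection hexp hε (by linarith) hC hdense
  obtain ⟨Ns, hNs, hpNs, πs, hπs⟩ :=
    C.symm.exists_isStableProjection hexp.symm hε (by linarith) hC.symm
      (by rwa [hyperbolicPoints_symm])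
  exact admitsLPS_of_isStableProjection (by simp [add_comm]) C.chart
    (by simpa only [C.chart_zero] using C.chart.map_source C.zero_mem_source) hexp
    (by positivity) (by linarith)
    (hNu.inter hNs) ⟨hpNu, hpNs⟩ (hπu.mono inter_subset_left) (hπs.mono inter_subset_right)

lemma admitsLPS_of_mem_PerH [CompactSpace M] {n : ℕ} (hα : 0 < α) (hexp : IsExpansive f α)
    (hdense : Dense (PerH f n)) (hp : p ∈ PerH f n) : AdmitsLPS f n p := by
  obtain ⟨r, hr, hpr⟩ := mem_iUnion₂.1 hp
  obtain ⟨C⟩ := nonempty_hyperbolicChart_of_mem_PerHr hpr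
  have hrn : r ≤ n := Nat.lt_succ_iff.1 (Finset.mem_range.1 hr)
  exact C.admitsLPS (Nat.sub_sub_self hrn).symm hα hexp
    (hdense.mono (PerH_subset_hyperbolicPoints f n))

lemma isOpen_setOf_admitsLPS (f : M ≃ₜ M) (n : ℕ) [ChartedSpace (EuclideanSpace ℝ (Fin n)) M] :
    IsOpen {p | AdmitsLPS f n p} := by
  refine isOpen_iff_mem_nhds.2 ?_
  rintro p ⟨k, h, ε, hε, hemb, hp, hlocal⟩
  have hopen : IsOpen (range h) :=
    isOpen_range_of_injective (E' := EuclideanSpace ℝ (Fin n)) (by simp; lia)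
      hemb.continuous hemb.injective
  exact mem_of_superset (hopen.mem_nhds hp) fun q hq => ⟨k, h, ε, hε, hemb, hq, hlocal⟩

end LocalProductStructure

theorem stmt0_general {M : Type*} [MetricSpace M] [CompactSpace M]
    (n : ℕ) [ChartedSpace (EuclideanSpace ℝ (Fin n)) M]
    (f : M ≃ₜ M) (α : ℝ) (hα : 0 < α) (hexp : IsExpansive f α)
    (hdense : closure (PerH f n) = Set.univ) :
    (∀ p ∈ PerH f n, AdmitsLPS f n p) ∧
      IsOpen {p : M | AdmitsLPS f n p} ∧ Dense {p : M | AdmitsLPS f n p} := by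
  have hPer : Dense (PerH f n) := dense_iff_closure_eq.2 hdense
  have hLPS : ∀ p ∈ PerH f n, AdmitsLPS f n p := fun _ =>
    admitsLPS_of_mem_PerH hα hexp hPer
  exact ⟨hLPS, isOpen_setOf_admitsLPS f n, hPer.mono hLPS⟩

/-- **Theorem 1.** For an expansive homeomorphism of a compact connected boundaryless
`n`-manifold whose topologically hyperbolic periodic points are dense, every point of
`Per_H` admits a local product structure; consequently the set of points admitting a
local product structure is open and dense. -/
theorem stmt0 {M : Type*} [MetricSpace M] [CompactSpace M] [ConnectedSpace M]
    (n : ℕ) [ChartedSpace (EuclideanSpace ℝ (Fin n)) M]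
    (f : M ≃ₜ M) (α : ℝ) (hα : 0 < α) (hexp : IsExpansive f α)
    (hdense : closure (PerH f n) = Set.univ) :
    (∀ p ∈ PerH f n, AdmitsLPS f n p) ∧
      IsOpen {p : M | AdmitsLPS f n p} ∧ Dense {p : M | AdmitsLPS f n p} :=
  stmt0_general n f α hα hexp hdense
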